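/- (Knutson–Tao saturation theorem, invariant form) Let λ_1, …, λ_s be dominant weights of SL(n) whose sum lies in the root lattice. If for some positive integer m the space of SL(n)-invariants in V(mλ_1) ⊗ ⋯ ⊗ V(mλ_s) is nonzero, then the space of SL(n)-invariants in V(λ_1) ⊗ ⋯ ⊗ V(λ_s) is nonzero. -/

import Mathlib

/-!
(Knutson–Tao saturation theorem, invariant form.)  Let `λ₁, …, λ_s` be dominant weights of
`SL(n)` whose sum lies in the root lattice.  If for some positive integer `m` the space of
`SL(n)`-invariants in `V(mλ₁) ⊗ ⋯ ⊗ V(mλ_s)` is nonzero, then the space of `SL(n)`-invariants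
in `V(λ₁) ⊗ ⋯ ⊗ V(λ_s)` is nonzero.

Weights of `SL(n)` are characters of the diagonal maximal torus, `diag d ↦ ∏ dᵢ^{aᵢ}`; they are
parametrised by `a ∈ ℤⁿ` modulo `ℤ·(1,…,1)` (since `det = 1`).  Such a character class lies in the
root lattice (= sum-zero vectors mod `(1,…,1)`) iff `n` divides the sum of the coordinates.
The irreducible representation `V(a)` is encoded by: an irreducible representation possessing a
highest weight vector of weight `a`; `HasInvariant` says the space of invariants is nonzero.
-/

open scoped TensorProduct
abbrev SL (n : ℕ) := Matrix.SpecialLinearGroup (Fin n) ℂ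

section Defs

variable {n : ℕ} {V W : Type*} [AddCommGroup V] [Module ℂ V] [AddCommGroup W] [Module ℂ W]

/-- A matrix in `SL(n)` lying in the standard maximal torus (diagonal matrices). -/
def SLIsDiag (g : SL n) : Prop := ∀ i j, i ≠ j → g.val i j = 0

/-- A matrix in `SL(n)` lying in the unipotent radical of the standard Borel
(upper triangular, 1's on the diagonal). -/
def SLIsUniUpper (g : SL n) : Prop :=
  (∀ i, g.val i i = 1) ∧ ∀ i j : Fin n, j < i → g.val i j = 0

/-- `v` is a highest weight vector of weight `a` (a character of the diagonal torus,
`diag d ↦ ∏ dᵢ^{aᵢ}`): it is nonzero, fixed by the unipotent radical of the Borel, and the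
torus acts on it through the character `a`. -/
def IsHWVector (ρ : Representation ℂ (SL n) V) (a : Fin n → ℤ) (v : V) : Prop :=
  v ≠ 0 ∧ (∀ g, SLIsUniUpper g → ρ g v = v) ∧
    ∀ g, SLIsDiag g → ρ g v = (∏ i, g.val i i ^ a i) • v

/-- The irreducible representation `V(a)` of highest weight `a` occurs in `ρ`:
equivalently (for completely reducible `ρ`), `ρ` has a highest weight vector of weight `a`. -/
def Occurs (ρ : Representation ℂ (SL n) V) (a : Fin n → ℤ) : Prop := ∃ v, IsHWVector ρ a v

/-- `ρ` is irreducible: `V ≠ 0` and the only invariant subspaces are `⊥` and `⊤`. -/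
def RepIsIrreducible (ρ : Representation ℂ (SL n) V) : Prop :=
  (∃ v : V, v ≠ 0) ∧ ∀ p : Submodule ℂ V, (∀ g, ∀ x ∈ p, ρ g x ∈ p) → p = ⊥ ∨ p = ⊤

/-- The space of invariants `V^G` is nonzero. -/
def HasInvariant (ρ : Representation ℂ (SL n) V) : Prop := ∃ v : V, v ≠ 0 ∧ ∀ g, ρ g v = v

/-- Dominance of the weight `a` (for the standard choice of positive roots). -/
def SLDominant (a : Fin n → ℤ) : Prop := ∀ i j : Fin n, i ≤ j → a j ≤ a i

/-- The tensor product of a finite family of representations of `SL(n)`,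
with the diagonal action. -/
noncomputable def piTensorRep {r : ℕ} {V : Fin r → Type*} [∀ i, AddCommGroup (V i)]
    [∀ i, Module ℂ (V i)] (ρ : ∀ i, Representation ℂ (SL n) (V i)) :
    Representation ℂ (SL n) (⨂[ℂ] i, V i) where
  toFun g := PiTensorProduct.map fun i => ρ i g
  map_one' := by simp
  map_mul' g h := by
    simpa using PiTensorProduct.map_mul (fun i => ρ i g) (fun i => ρ i h)

/-- The tensor product of two representations of `SL(n)` with the diagonal action. -/
noncomputable def tensorRep2 (ρ : Representation ℂ (SL n) V) (σ : Representation ℂ (SL n) W) :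
    Representation ℂ (SL n) (V ⊗[ℂ] W) := ρ.tprod σ

end Defs

namespace Saturation

open MvPolynomial Matrix

theorem exists_derivation {σ K : Type*} [Field K] [Algebra (MvPolynomial σ ℂ) K]
    [IsFractionRing (MvPolynomial σ ℂ) K] (f : σ → K) :
    ∃ D : K →+ K, (∀ a b, D (a * b) = a * D b + b * D a) ∧
      ∀ s, D (algebraMap (MvPolynomial σ ℂ) K (X s)) = f s := by
  let g : MvPolynomial σ ℂ →+* TrivSqZeroExt K K :=
    eval₂Hom ((TrivSqZeroExt.inlHom K K).comp ((algebraMap (MvPolynomial σ ℂ) K).comp C))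
      (fun s => TrivSqZeroExt.inl (algebraMap (MvPolynomial σ ℂ) K (X s)) + TrivSqZeroExt.inr (f s))
  have hg : ∀ a, (g a).fst = algebraMap _ K a := by
    intro a
    have : ((TrivSqZeroExt.fstHom K K K).toRingHom.comp g) = algebraMap _ K := by
      apply MvPolynomial.ringHom_ext
      · intro r; simp [g]
      · intro s; simp [g]
    exact congrArg (fun h : MvPolynomial σ ℂ →+* K => h a) this
  have hu : ∀ y : nonZeroDivisors (MvPolynomial σ ℂ), IsUnit (g y) := by
    intro y
    rw [TrivSqZeroExt.isUnit_iff_isUnit_fst, hg]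
    exact IsLocalization.map_units K y
  let F : K →+* TrivSqZeroExt K K := IsLocalization.lift hu
  have hF : ∀ a, (F a).fst = a := by
    intro a
    have : ((TrivSqZeroExt.fstHom K K K).toRingHom.comp F) = RingHom.id K := by
      apply IsLocalization.ringHom_ext (nonZeroDivisors (MvPolynomial σ ℂ))
      ext a <;> simp [F, hg]
    exact congrArg (fun h : K →+* K => h a) this
  refine ⟨⟨⟨fun a => (F a).snd, by simp⟩, by intro a b; simp⟩, ?_, ?_⟩
  · intro a b
    simp [TrivSqZeroExt.snd_mul, hF, mul_comm]
  · intro s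
    simp [F, g]

theorem map_dotProduct_mulVec {K : Type*} [Field K] {D : K →+ K}
    (hD : ∀ a b, D (a * b) = a * D b + b * D a) {β ν : Type*} [Fintype β] [Fintype ν]
    (y : β → K) (φ : Matrix β ν K) (v : ν → K) :
    D (y ⬝ᵥ φ *ᵥ v) =
      (D ∘ y) ⬝ᵥ φ *ᵥ v + y ⬝ᵥ (φ.map D) *ᵥ v + y ⬝ᵥ φ *ᵥ (D ∘ v) := by
  simp only [dotProduct, mulVec, map_sum, hD, Finset.mul_sum, Matrix.map_apply,
    Function.comp_apply, ← Finset.sum_add_distrib]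
  refine Finset.sum_congr rfl fun q _ => ?_
  refine Finset.sum_congr rfl fun p _ => ?_
  ring

/-- In a linear space of matrices over an infinite field, an element of maximal rank sees every
other element vanish between its kernel and cokernel. -/
theorem exists_generic_mem {K : Type*} [Field K] [Infinite K] {β ν : Type*} [Fintype β]
    [Fintype ν] (H : Submodule K (Matrix β ν K)) :
    ∃ φ ∈ H, ∀ ψ ∈ H, ∀ (y : β → K) (v : ν → K), y ᵥ* φ = 0 → φ *ᵥ v = 0 →
      y ⬝ᵥ ψ *ᵥ v = 0 := by
  classical
  obtain ⟨φ, hφ, hmax⟩ : ∃ φ ∈ H, ∀ ψ ∈ H, ψ.rank ≤ φ.rank := by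
    let P : ℕ → Prop := fun r => ∃ φ ∈ H, φ.rank = r
    have hb : ∀ r, P r → r ≤ Fintype.card ν := by
      rintro r ⟨φ, -, rfl⟩; exact φ.rank_le_card_width
    have h0 : P (rank (0 : Matrix β ν K)) := ⟨0, H.zero_mem, rfl⟩
    obtain ⟨φ, hφ, hr⟩ := Nat.findGreatest_spec (P := P) (hb _ h0) h0
    refine ⟨φ, hφ, fun ψ hψ => ?_⟩
    rw [hr]
    exact Nat.le_findGreatest (hb _ ⟨ψ, hψ, rfl⟩) ⟨ψ, hψ, rfl⟩
  refine ⟨φ, hφ, fun ψ hψ y v hy hv => ?_⟩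
  by_contra hne
  have hdim : ∃ r, φ.rank = r := ⟨_, rfl⟩
  obtain ⟨r, hr⟩ := hdim
  let b : Module.Basis (Fin r) K (LinearMap.range φ.mulVecLin) :=
    Module.finBasisOfFinrankEq K _ hr
  have hb : ∀ k, ∃ u, φ *ᵥ u = (b k : β → K) := fun k => (b k).2
  choose u hu using hb
  have hbli : LinearIndependent K (fun k => (b k : β → K)) :=
    b.linearIndependent.map' (LinearMap.range φ.mulVecLin).subtype (Submodule.ker_subtype _)
  have hnot : -(ψ *ᵥ v) ∉ Submodule.span K (Set.range fun k => (b k : β → K)) := by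
    intro hmem
    apply hne
    have hle : Submodule.span K (Set.range fun k => (b k : β → K)) ≤
        LinearMap.ker (dotProductBilin K K y) := by
      rw [Submodule.span_le]
      rintro _ ⟨k, rfl⟩
      change y ⬝ᵥ (b k : β → K) = 0
      rw [← hu, dotProduct_mulVec, hy, zero_dotProduct]
    have := hle hmem
    change y ⬝ᵥ (-(ψ *ᵥ v)) = 0 at this
    simpa using this
  have hli : LinearIndependent K
      (Fin.cons (-(ψ *ᵥ v)) fun k => (b k : β → K) : Fin (r + 1) → _) :=
    linearIndependent_finCons.2 ⟨hbli, hnot⟩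
  let B : Matrix (Fin (r + 1)) β K := Fin.cons (-(ψ *ᵥ v)) fun k => (b k : β → K)
  let C : Matrix (Fin (r + 1)) β K := Fin.cons 0 fun k => ψ *ᵥ u k
  have hBr : LinearIndependent K B.row := hli
  obtain ⟨G, hG⟩ : ∃ G : Matrix β (Fin (r + 1)) K, B * G = 1 := by
    have := Matrix.vecMul_injective_iff.2 hBr
    obtain ⟨G, hG⟩ := LinearMap.exists_leftInverse_of_injective B.vecMulLinear
      (LinearMap.ker_eq_bot.2 this)
    refine ⟨LinearMap.toMatrixRight' G, ?_⟩
    apply Matrix.toLinearMapRight'.injective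
    rw [Matrix.toLinearMapRight'_mul, Matrix.toLinearMapRight'_one, ← hG]
    congr 1
    exact LinearMap.toMatrixRight'.symm_apply_apply G
  obtain ⟨t, ht⟩ : ∃ t : K, t ∉ (C * G).charpoly.roots.toFinset :=
    Infinite.exists_notMem_finset _
  have hdet : ((t • B - C) * G).det ≠ 0 := by
    intro h0
    apply ht
    rw [Multiset.mem_toFinset, Polynomial.mem_roots (Matrix.charpoly_monic _).ne_zero,
      Polynomial.IsRoot.def, Matrix.eval_charpoly, ← h0,
      Matrix.sub_mul, Matrix.smul_mul, hG, Matrix.smul_one_eq_diagonal]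
    rfl
  have hrow : LinearIndependent K (t • B - C).row := by
    rw [← Matrix.vecMul_injective_iff]
    have hinj : Function.Injective ((t • B - C) * G).vecMul := by
      rw [Matrix.vecMul_injective_iff_isUnit, Matrix.isUnit_iff_isUnit_det]
      exact isUnit_iff_ne_zero.2 hdet
    intro a a' h
    apply hinj
    change a ᵥ* _ = a' ᵥ* _
    rw [← vecMul_vecMul, ← vecMul_vecMul]
    exact congrArg (· ᵥ* G) h
  have hmem : ∀ k, (t • B - C).row k ∈ LinearMap.range (t • φ - ψ).mulVecLin := by
    intro k
    refine Fin.cases ?_ (fun k => ?_) k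
    · refine ⟨t • v, ?_⟩
      ext q
      change ((t • φ - ψ) *ᵥ (t • v)) q = t * (-(ψ *ᵥ v)) q - 0
      simp [sub_mulVec, smul_mulVec, mulVec_smul, hv]
    · refine ⟨u k, ?_⟩
      ext q
      change ((t • φ - ψ) *ᵥ u k) q = t * (b k : β → K) q - (ψ *ᵥ u k) q
      simp [sub_mulVec, smul_mulVec, hu]
  have hle := hmax (t • φ - ψ) (H.sub_mem (H.smul_mem t hφ) hψ)
  have hcard := finrank_span_eq_card hrow
  have := Submodule.finrank_mono (Submodule.span_le.2 (Set.range_subset_iff.2 hmem))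
  rw [hcard, Fintype.card_fin] at this
  rw [hr] at hle
  exact absurd (this.trans hle) (by omega)

section LinearAlgebra

variable {K : Type*} [Field K] {n : ℕ}

/-- Gaussian elimination of a family of vectors against a subspace, respecting the order of the
family. -/
theorem exists_adapted {β : Type*} (x : Fin n → β → K) (S : Finset (Fin n))
    (T : Submodule K (β → K)) :
    ∃ (S₁ : Finset (Fin n)) (c : Matrix (Fin n) (Fin n) K), S₁ ⊆ S ∧
      (∀ r, c r r = 1) ∧ (∀ r r', r < r' → c r r' = 0) ∧
      (∀ r ∈ S, ∀ r' ∉ S, c r r' = 0) ∧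
      (∀ r ∈ S₁, ∑ r', c r r' • x r' ∈ T) ∧
      ∀ (d : ℕ) (a : Fin n → K), (∀ r, a r ≠ 0 → r ∈ S ∧ (r : ℕ) < d) →
        ∑ r, a r • x r ∈ T →
        ∃ a' : Fin n → K, (∀ r, a' r ≠ 0 → r ∈ S₁ ∧ (r : ℕ) < d) ∧
          ∑ r, a' r • ∑ r', c r r' • x r' = ∑ r, a r • x r := by
  classical
  let P : Fin n → (Fin n → K) → Prop := fun r c =>
    c r = 1 ∧ (∀ r', r < r' → c r' = 0) ∧ (∀ r' ∉ S, c r' = 0) ∧ ∑ r', c r' • x r' ∈ T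
  let S₁ := S.filter fun r => ∃ c, P r c
  have hc : ∀ r, ∃ c : Fin n → K, c r = 1 ∧ (∀ r', r < r' → c r' = 0) ∧
      (r ∈ S → ∀ r' ∉ S, c r' = 0) ∧ (r ∈ S₁ → ∑ r', c r' • x r' ∈ T) := by
    intro r
    by_cases hr : r ∈ S₁
    · obtain ⟨c, h1, h2, h3, h4⟩ := (Finset.mem_filter.1 hr).2
      exact ⟨c, h1, h2, fun _ => h3, fun _ => h4⟩
    · refine ⟨Pi.single r 1, by simp, fun r' h => by simp [h.ne'], fun hS r' h => ?_,
        fun h => absurd h hr⟩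
      have : r' ≠ r := by rintro rfl; exact h hS
      simp [this]
  choose c h1 h2 h3 h4 using hc
  refine ⟨S₁, c, Finset.filter_subset _ _, h1, h2, h3, h4, ?_⟩
  intro d
  induction d with
  | zero =>
    intro a ha _
    refine ⟨0, by simp, ?_⟩
    have : a = 0 := by
      funext r
      by_contra h
      exact absurd (ha r h).2 (by omega)
    simp [this]
  | succ d ih =>
    intro a ha hT
    by_cases hex : ∃ r : Fin n, (r : ℕ) = d ∧ a r ≠ 0
    · obtain ⟨r, rfl, hr⟩ := hex
      have hrS := (ha r hr).1
      have hr1 : r ∈ S₁ := by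
        refine Finset.mem_filter.2 ⟨hrS, (a r)⁻¹ • a, by simp [hr], ?_, ?_, ?_⟩
        · intro r' h
          have : a r' = 0 := by
            by_contra h'
            have := (ha r' h').2
            have : (r : ℕ) < r' := h
            omega
          simp [this]
        · intro r' h
          have : a r' = 0 := by
            by_contra h'
            exact h (ha r' h').1
          simp [this]
        · have := T.smul_mem (a r)⁻¹ hT
          simpa [Finset.smul_sum, smul_smul] using this
      obtain ⟨a', h5, h6⟩ := ih (fun r' => a r' - a r * c r r') (by
          intro r' h
          have h7 : r' ∈ S := by
            by_contra h'
            apply h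
            have : a r' = 0 := by
              by_contra h''
              exact h' (ha r' h'').1
            simp [this, h3 r hrS r' h']
          refine ⟨h7, ?_⟩
          by_contra h'
          apply h
          rcases (not_lt.1 h').lt_or_eq with h'' | h''
          · have : a r' = 0 := by
              by_contra h8
              have := (ha r' h8).2
              omega
            simp [this, h2 r r' h'']
          · have : r = r' := Fin.ext h''
            subst this
            simp [h1]) (by
          have := T.sub_mem hT (T.smul_mem (a r) (h4 r hr1))
          simpa [sub_smul, Finset.smul_sum, smul_smul] using this)
      refine ⟨a' + Pi.single r (a r), ?_, ?_⟩
      · intro r' h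
        by_cases hrr : r' = r
        · subst hrr; exact ⟨hr1, by omega⟩
        · have := h5 r' (by simpa [hrr] using h)
          exact ⟨this.1, by omega⟩
      · simp only [Pi.add_apply, add_smul, Finset.sum_add_distrib, h6]
        have h8 : ∑ r', (Pi.single r (a r) : Fin n → K) r' • ∑ r'', c r' r'' • x r'' =
            a r • ∑ r'', c r r'' • x r'' := by
          rw [Finset.sum_eq_single r (by intro r' _ h; simp [h]) (by simp)]
          simp
        rw [h8]
        simp [sub_smul, Finset.smul_sum, smul_smul]
    · push Not at hex
      obtain ⟨a', h5, h6⟩ := ih a (fun r h => ⟨(ha r h).1, by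
        have := (ha r h).2
        have := mt (hex r) h
        omega⟩) hT
      exact ⟨a', fun r h => ⟨(h5 r h).1, by have := (h5 r h).2; omega⟩, h6⟩

/-- A triangular change of a family which is independent on `S` stays independent on `S`. -/
theorem indep_of_unitriangular {E : Type*} [AddCommGroup E] [Module K E] {x : Fin n → E}
    {S : Finset (Fin n)}
    (hx : ∀ a : Fin n → K, (∀ r, a r ≠ 0 → r ∈ S) → ∑ r, a r • x r = 0 → a = 0)
    {c : Matrix (Fin n) (Fin n) K} (h1 : ∀ r, c r r = 1) (h2 : ∀ r r', r < r' → c r r' = 0)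
    (h3 : ∀ r ∈ S, ∀ r' ∉ S, c r r' = 0)
    (a : Fin n → K) (ha : ∀ r, a r ≠ 0 → r ∈ S) (h : ∑ r, a r • ∑ r', c r r' • x r' = 0) :
    a = 0 := by
  have hdet : IsUnit c.det := by
    rw [Matrix.det_of_isLowerTriangular c (fun i j hij => h2 i j hij)]
    simp [h1]
  have hac : a ᵥ* c = 0 := by
    apply hx
    · intro r' hr'
      by_contra hS
      apply hr'
      simp only [vecMul, dotProduct]
      refine Finset.sum_eq_zero fun r _ => ?_
      by_cases har : a r = 0
      · simp [har]
      · simp [h3 r (ha r har) r' hS]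
    · rw [← h]
      simp only [vecMul, dotProduct, Finset.sum_smul, Finset.smul_sum, smul_smul]
      exact Finset.sum_comm
  have := Matrix.vecMul_injective_iff_isUnit.2 ((Matrix.isUnit_iff_isUnit_det c).2 hdet)
  apply this
  simpa using hac

/-- The cardinality of the index set of an independent spanning family. -/
theorem card_eq_finrank_of_indep {E : Type*} [AddCommGroup E] [Module K E]
    (T : Submodule K E) {x : Fin n → E} {S : Finset (Fin n)} (hxT : ∀ r ∈ S, x r ∈ T)
    (hx : ∀ a : Fin n → K, (∀ r, a r ≠ 0 → r ∈ S) → ∑ r, a r • x r = 0 → a = 0)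
    (hspan : ∀ y ∈ T, ∃ a : Fin n → K, (∀ r, a r ≠ 0 → r ∈ S) ∧ ∑ r, a r • x r = y) :
    S.card = Module.finrank K T := by
  classical
  have hsum : ∀ (a : Fin n → K), (∀ r, a r ≠ 0 → r ∈ S) →
      ∑ r, a r • x r = ∑ r : S, a r • x r := by
    intro a ha
    rw [Finset.sum_coe_sort S (fun r => a r • x r)]
    refine (Finset.sum_subset (Finset.subset_univ _) fun r _ hr => ?_).symm
    have : a r = 0 := by
      by_contra h
      exact hr (ha r h)
    simp [this]
  have hli : LinearIndependent K (fun r : S => (⟨x r, hxT r r.2⟩ : T)) := by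
    rw [Fintype.linearIndependent_iff]
    intro g hg r
    have := hx (fun r => if h : r ∈ S then g ⟨r, h⟩ else 0)
      (fun r h => by by_contra h'; simp [h'] at h) (by
        rw [hsum _ (fun r h => by by_contra h'; simp [h'] at h)]
        have := congrArg T.subtype hg
        simpa using this)
    simpa using congrFun this r
  have hsp : ⊤ ≤ Submodule.span K (Set.range (fun r : S => (⟨x r, hxT r r.2⟩ : T))) := by
    rintro ⟨y, hy⟩ -
    obtain ⟨a, ha, rfl⟩ := hspan y hy
    rw [Submodule.mem_span_range_iff_exists_fun]
    refine ⟨fun r => a r, ?_⟩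
    apply Subtype.ext
    change _ = ∑ r, a r • x r
    rw [hsum a ha]
    simp
  rw [Module.finrank_eq_card_basis (Module.Basis.mk hli hsp), Fintype.card_coe]

end LinearAlgebra

section Step

variable {K : Type*} [Field K] {n : ℕ} {ι J β ν : Type*}

/-- Coefficient systems `z j r` supported on the rows `r < d j` lying in `S (i j)`. -/
def rowSupport (K : Type*) [Field K] (i : J → ι) (d : J → ℕ) (S : ι → Finset (Fin n)) :
    Submodule K (J → Fin n → K) where
  carrier := {z | ∀ j r, z j r ≠ 0 → r ∈ S (i j) ∧ (r : ℕ) < d j}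
  zero_mem' := by intro j r h; simp at h
  add_mem' := by
    intro z w hz hw j r h
    by_cases h' : z j r = 0
    · exact hw j r (by simpa [h'] using h)
    · exact hz j r h'
  smul_mem' := by
    intro a z hz j r h
    exact hz j r (by intro h'; simp [h'] at h)

/-- The combination of the rank one matrices `x (i j) r ⊗ v j` with coefficients `z j r`. -/
def comb [Fintype J] (i : J → ι) (x : ι → Fin n → β → K) (v : J → ν → K) :
    (J → Fin n → K) →ₗ[K] Matrix β ν K where
  toFun z := ∑ j, ∑ r, z j r • vecMulVec (x (i j) r) (v j)
  map_add' z w := by simp [add_smul, Finset.sum_add_distrib]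
  map_smul' a z := by simp [Finset.smul_sum, smul_smul]

theorem comb_apply [Fintype J] (i : J → ι) (x : ι → Fin n → β → K) (v : J → ν → K)
    (z : J → Fin n → K) (q : β) (p : ν) :
    comb i x v z q p = ∑ j, ∑ r, z j r * (x (i j) r q * v j p) := by
  simp [comb, Matrix.sum_apply, vecMulVec_apply]

theorem sum_mul_dotProduct_mulVec [Fintype J] [Fintype β] [Fintype ν] (i : J → ι)
    (x : ι → Fin n → β → K) (v : J → ν → K) (z : J → Fin n → K) (η : Matrix β ν K) :
    ∑ j, ∑ r, z j r * (x (i j) r ⬝ᵥ η *ᵥ v j) = ∑ q, ∑ p, η q p * comb i x v z q p := by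
  simp only [comb_apply, dotProduct, mulVec, Finset.mul_sum]
  have h1 : ∀ (q : β) (p : ν), ∑ j, ∑ r, η q p * (z j r * (x (i j) r q * v j p)) =
      ∑ w : J × Fin n, η q p * (z w.1 w.2 * (x (i w.1) w.2 q * v w.1 p)) := by
    intro q p; rw [Fintype.sum_prod_type]
  have h2 : ∀ F : J → Fin n → K, ∑ j, ∑ r, F j r = ∑ w : J × Fin n, F w.1 w.2 := by
    intro F; rw [Fintype.sum_prod_type]
  simp only [h1]
  rw [h2]
  rw [Finset.sum_comm]
  refine Finset.sum_congr rfl fun q _ => ?_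
  rw [Finset.sum_comm]
  refine Finset.sum_congr rfl fun p _ => Finset.sum_congr rfl fun w _ => ?_
  ring

theorem exists_matrix_of_dual [Fintype β] [Fintype ν] (f : Module.Dual K (Matrix β ν K)) :
    ∃ η : Matrix β ν K, ∀ M : Matrix β ν K, f M = ∑ q, ∑ p, η q p * M q p := by
  classical
  refine ⟨fun q p => f (Matrix.single q p 1), fun M => ?_⟩
  conv_lhs => rw [Matrix.matrix_eq_sum_single M]
  simp only [map_sum]
  refine Finset.sum_congr rfl fun q _ => Finset.sum_congr rfl fun p _ => ?_
  have : Matrix.single q p (M q p) = M q p • Matrix.single q p (1 : K) := by simp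
  rw [this, map_smul, smul_eq_mul, mul_comm]

/-- The matrices pairing to zero with all the rank one matrices in the system. -/
def annMat [Fintype β] [Fintype ν] (i : J → ι) (d : J → ℕ) (S : ι → Finset (Fin n))
    (x : ι → Fin n → β → K) (v : J → ν → K) : Submodule K (Matrix β ν K) where
  carrier := {φ | ∀ j r, r ∈ S (i j) → (r : ℕ) < d j → x (i j) r ⬝ᵥ φ *ᵥ v j = 0}
  zero_mem' := by intro j r _ _; simp
  add_mem' := by
    intro φ ψ hφ hψ j r h h'
    rw [add_mulVec, dotProduct_add, hφ j r h h', hψ j r h h', add_zero]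
  smul_mem' := by
    intro a φ hφ j r h h'
    rw [smul_mulVec, dotProduct_smul, hφ j r h h', smul_zero]

theorem annMat_ne_bot [Fintype J] [Fintype β] [Fintype ν] (i : J → ι) (d : J → ℕ)
    (S : ι → Finset (Fin n)) (x : ι → Fin n → β → K) (v : J → ν → K)
    (hcount : ∑ j, ((S (i j)).filter fun r : Fin n => (r : ℕ) < d j).card ≤
      Fintype.card β * Fintype.card ν)
    {z : J → Fin n → K} (hz : z ∈ rowSupport K i d S) (hz0 : z ≠ 0)
    (hc : comb i x v z = 0) : annMat i d S x v ≠ ⊥ := by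
  classical
  intro hbot
  let R := Σ j : J, {r // r ∈ (S (i j)).filter fun r : Fin n => (r : ℕ) < d j}
  let E : Matrix β ν K →ₗ[K] (R → K) :=
    { toFun := fun φ w => x (i w.1) w.2 ⬝ᵥ φ *ᵥ v w.1
      map_add' := by intro φ ψ; funext w; simp [add_mulVec]
      map_smul' := by intro a φ; funext w; simp [smul_mulVec] }
  have hker : LinearMap.ker E = ⊥ := by
    rw [eq_bot_iff, ← hbot]
    intro φ hφ j r h h'
    exact congrFun (show E φ = 0 from hφ) ⟨j, r, Finset.mem_filter.2 ⟨h, h'⟩⟩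
  let f : (R → K) →ₗ[K] K := ∑ w : R, z w.1 w.2 • LinearMap.proj w
  have hfE : ∀ φ, f (E φ) = 0 := by
    intro φ
    have h1 : f (E φ) = ∑ w : R, z w.1 w.2 * (x (i w.1) w.2 ⬝ᵥ φ *ᵥ v w.1) := by
      simp [f, E]
    have h2 := sum_mul_dotProduct_mulVec i x v z φ
    rw [hc] at h2
    rw [h1, Fintype.sum_sigma]
    rw [show (∑ q, ∑ p, φ q p * (0 : Matrix β ν K) q p) = 0 by simp] at h2
    rw [← h2]
    refine Finset.sum_congr rfl fun j _ => ?_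
    rw [Finset.sum_coe_sort ((S (i j)).filter fun r : Fin n => (r : ℕ) < d j)
      (fun r => z j r * (x (i j) r ⬝ᵥ φ *ᵥ v j))]
    refine Finset.sum_subset (Finset.subset_univ _) fun r _ hr => ?_
    have : z j r = 0 := by
      by_contra h
      exact hr (Finset.mem_filter.2 (hz j r h))
    simp [this]
  have hne : LinearMap.range E ≠ ⊤ := by
    intro htop
    apply hz0
    funext j r
    by_contra h
    have hmem := hz j r h
    let w : R := ⟨j, r, Finset.mem_filter.2 hmem⟩
    have : (Pi.single w 1 : R → K) ∈ LinearMap.range E := by rw [htop]; trivial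
    obtain ⟨φ, hφ⟩ := this
    have h3 := hfE φ
    rw [hφ] at h3
    apply h
    have : f (Pi.single w 1) = z j r := by
      simp only [f, LinearMap.sum_apply, LinearMap.smul_apply, LinearMap.proj_apply, smul_eq_mul]
      rw [Finset.sum_eq_single w (by intro w' _ hw; simp [hw]) (by simp)]
      simp [w]
    rw [← this, h3]; rfl
  have h1 := Submodule.finrank_lt hne
  rw [LinearMap.finrank_range_of_inj (LinearMap.ker_eq_bot.1 hker), Module.finrank_matrix,
    Module.finrank_fintype_fun_eq_card, Module.finrank_self, mul_one, Fintype.card_sigma] at h1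
  simp only [Fintype.card_coe] at h1
  omega

/-- A coefficient system killing all first order variations has its column combinations in the
left kernel and its row combinations in the right kernel of `φ`. -/
theorem mem_kernels_of_variations [Fintype J] [Fintype β] [Fintype ν] [DecidableEq ι]
    (i : J → ι) (x : ι → Fin n → β → K) (v : J → ν → K) (φ : Matrix β ν K) (z : J → Fin n → K)
    (h : ∀ (dx : ι → Fin n → β → K) (dv : J → ν → K),
      ∑ j, ∑ r, z j r * (dx (i j) r ⬝ᵥ φ *ᵥ v j + x (i j) r ⬝ᵥ φ *ᵥ dv j) = 0) :
    (∀ j, (∑ r, z j r • x (i j) r) ᵥ* φ = 0) ∧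
      ∀ i₀ r, φ *ᵥ (∑ j, if i j = i₀ then z j r • v j else 0) = 0 := by
  classical
  constructor
  · intro j
    funext p
    have := h 0 (fun j' => if j' = j then Pi.single p 1 else 0)
    simp only [Pi.zero_apply, zero_dotProduct, zero_add] at this
    rw [Finset.sum_eq_single j (by intro j' _ hj; simp [hj]) (by simp)] at this
    simp only [if_true] at this
    rw [← dotProduct_single_one ((∑ r, z j r • x (i j) r) ᵥ* φ) p, ← dotProduct_mulVec,
      sum_dotProduct]
    simpa using this
  · intro i₀ r
    funext q
    have := h (fun i' r' => if i' = i₀ ∧ r' = r then Pi.single q 1 else 0) 0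
    simp only [Pi.zero_apply, mulVec_zero, dotProduct_zero, add_zero] at this
    rw [mulVec_sum, Finset.sum_apply]
    simp only [Pi.zero_apply]
    rw [← this]
    refine Finset.sum_congr rfl fun j _ => ?_
    rw [Finset.sum_eq_single r (by intro r' _ hr; simp [hr]) (by simp)]
    by_cases hj : i j = i₀
    · simp [hj, mulVec_smul]
    · simp [hj]

end Step

section Step

variable {K : Type*} [Field K] {n b : ℕ} {ι J ν : Type*} [Fintype J] [Fintype ν]

/-- The conversion of coefficient systems with respect to an adapted family. -/
theorem exists_adapted_system [DecidableEq ι] {i : J → ι} {d : J → ℕ}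
    {S S₁ : ι → Finset (Fin n)} {x x' : ι → Fin n → Fin b → K} {v : J → ν → K}
    {φ : Matrix (Fin b) ν K}
    (hx' : ∀ i₀ (a : Fin n → K), (∀ r, a r ≠ 0 → r ∈ S₁ i₀) → ∑ r, a r • x' i₀ r = 0 → a = 0)
    (had : ∀ i₀ (d : ℕ) (a : Fin n → K), (∀ r, a r ≠ 0 → r ∈ S i₀ ∧ (r : ℕ) < d) →
        (∑ r, a r • x i₀ r) ᵥ* φ = 0 →
        ∃ a' : Fin n → K, (∀ r, a' r ≠ 0 → r ∈ S₁ i₀ ∧ (r : ℕ) < d) ∧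
          ∑ r, a' r • x' i₀ r = ∑ r, a r • x i₀ r)
    {z : J → Fin n → K} (hz : z ∈ rowSupport K i d S)
    (hzl : ∀ j, (∑ r, z j r • x (i j) r) ᵥ* φ = 0)
    (hzr : ∀ i₀ r, φ *ᵥ (∑ j, if i j = i₀ then z j r • v j else 0) = 0) :
    ∃ z' ∈ rowSupport K i d S₁, (∀ j, ∑ r, z' j r • x' (i j) r = ∑ r, z j r • x (i j) r) ∧
      (∀ i₀ r, φ *ᵥ (∑ j, if i j = i₀ then z' j r • v j else 0) = 0) ∧
      comb i x' v z' = comb i x v z := by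
  choose z' hz' hzz using fun j => had (i j) (d j) (z j) (fun r h => hz j r h) (hzl j)
  refine ⟨z', fun j r h => hz' j r h, hzz, ?_, ?_⟩
  · intro i₀ r
    funext q
    have key : (fun r => ∑ j, if i j = i₀ then z' j r * (φ *ᵥ v j) q else 0) = 0 := by
      apply hx' i₀
      · intro r h
        obtain ⟨j, -, hj⟩ := Finset.exists_ne_zero_of_sum_ne_zero h
        split_ifs at hj with hij
        · rw [← hij]
          exact (hz' j r (left_ne_zero_of_mul hj)).1
        · exact absurd rfl hj
      · have e1 : ∀ (w : J → Fin n → K) (y : ι → Fin n → Fin b → K),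
            ∑ r, (∑ j, if i j = i₀ then w j r * (φ *ᵥ v j) q else 0) • y i₀ r =
            ∑ j, if i j = i₀ then (φ *ᵥ v j) q • ∑ r, w j r • y (i j) r else 0 := by
          intro w y
          simp only [Finset.sum_smul]
          rw [Finset.sum_comm]
          refine Finset.sum_congr rfl fun j _ => ?_
          split_ifs with hij
          · subst hij
            rw [Finset.smul_sum]
            refine Finset.sum_congr rfl fun r _ => ?_
            rw [smul_smul, mul_comm]
          · simp
        rw [e1 z' x']
        simp only [hzz]
        rw [← e1 z x]
        refine Finset.sum_eq_zero fun r _ => ?_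
        have := congrFun (hzr i₀ r) q
        rw [mulVec_sum, Finset.sum_apply] at this
        have h2 : (∑ j, if i j = i₀ then z j r * (φ *ᵥ v j) q else 0) = 0 := by
          refine Eq.trans (Finset.sum_congr rfl fun j _ => ?_) this
          split_ifs
          · simp [mulVec_smul]
          · simp
        rw [h2, zero_smul]
    rw [mulVec_sum, Finset.sum_apply]
    refine Eq.trans (Finset.sum_congr rfl fun j _ => ?_) (congrFun key r)
    split_ifs
    · simp [mulVec_smul]
    · simp
  · ext q p
    rw [comb_apply, comb_apply]
    refine Finset.sum_congr rfl fun j _ => ?_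
    have := congrFun (hzz j) q
    simp only [Finset.sum_apply, Pi.smul_apply, smul_eq_mul] at this
    simp only [← mul_assoc, ← Finset.sum_mul]
    rw [this]

/-- The rank one matrices supported on the kernels of a generic annihilating matrix are
combinations of an adapted family: the infinitesimal part of the argument. -/
theorem pairing_eq_zero_of_generic [DecidableEq ι] {i : J → ι} {d : J → ℕ}
    {S : ι → Finset (Fin n)} {x : ι → Fin n → Fin b → K} {v : J → ν → K}
    (hD : ∀ (dx : ι → Fin n → Fin b → K) (dv : J → ν → K), ∃ D : K →+ K,
      (∀ a b, D (a * b) = a * D b + b * D a) ∧ (∀ i₀ r q, D (x i₀ r q) = dx i₀ r q) ∧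
      ∀ j p, D (v j p) = dv j p)
    {φ : Matrix (Fin b) ν K} (hφ : φ ∈ annMat i d S x v)
    (hgen : ∀ ψ ∈ annMat i d S x v, ∀ (y : Fin b → K) (u : ν → K), y ᵥ* φ = 0 → φ *ᵥ u = 0 →
      y ⬝ᵥ ψ *ᵥ u = 0)
    (η : Matrix (Fin b) ν K)
    (hη : ∀ z ∈ rowSupport K i d S, (∀ j, (∑ r, z j r • x (i j) r) ᵥ* φ = 0) →
      (∀ i₀ r, φ *ᵥ (∑ j, if i j = i₀ then z j r • v j else 0) = 0) →
      ∑ j, ∑ r, z j r * (x (i j) r ⬝ᵥ η *ᵥ v j) = 0)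
    (y : Fin b → K) (u : ν → K) (hy : y ᵥ* φ = 0) (hu : φ *ᵥ u = 0) :
    y ⬝ᵥ η *ᵥ u = 0 := by
  classical
  let mask : J → Fin n → K := fun j r => if r ∈ S (i j) ∧ (r : ℕ) < d j then 1 else 0
  let L : ((ι → Fin n → Fin b → K) × (J → ν → K)) →ₗ[K] (J × Fin n → K) :=
    { toFun := fun D w => mask w.1 w.2 *
        (D.1 (i w.1) w.2 ⬝ᵥ φ *ᵥ v w.1 + x (i w.1) w.2 ⬝ᵥ φ *ᵥ D.2 w.1)
      map_add' := by
        intro D E; funext w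
        simp only [Prod.fst_add, Prod.snd_add, Pi.add_apply, add_dotProduct, mulVec_add,
          dotProduct_add]
        ring
      map_smul' := by
        intro a D; funext w
        simp only [Prod.smul_fst, Prod.smul_snd, Pi.smul_apply, smul_dotProduct, mulVec_smul,
          dotProduct_smul, smul_eq_mul, RingHom.id_apply]
        ring }
  let t : J × Fin n → K := fun w => mask w.1 w.2 * (x (i w.1) w.2 ⬝ᵥ η *ᵥ v w.1)
  have ht : t ∈ LinearMap.range L := by
    by_contra hnot
    obtain ⟨f, hft, hf⟩ := Submodule.exists_le_ker_of_notMem hnot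
    let z : J → Fin n → K := fun j r => f (Pi.single (j, r) 1) * mask j r
    have hfz : ∀ F : J → Fin n → K, f (fun w => mask w.1 w.2 * F w.1 w.2) =
        ∑ j, ∑ r, z j r * F j r := by
      intro F
      rw [LinearMap.pi_apply_eq_sum_univ f, Fintype.sum_prod_type]
      refine Finset.sum_congr rfl fun j _ => Finset.sum_congr rfl fun r _ => ?_
      have : (fun w => if (j, r) = w then (1 : K) else 0) = Pi.single (j, r) 1 := by
        funext w
        simp [Pi.single_apply, eq_comm]
      rw [this, smul_eq_mul]
      ring
    have hz : z ∈ rowSupport K i d S := by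
      intro j r h
      by_contra h'
      apply h
      simp [z, mask, h']
    have hvar := mem_kernels_of_variations i x v φ z (fun dx dv => by
      rw [← hfz]
      exact hf ⟨(dx, dv), rfl⟩)
    apply hft
    change f (fun w => mask w.1 w.2 * (x (i w.1) w.2 ⬝ᵥ η *ᵥ v w.1)) = 0
    rw [hfz fun j r => x (i j) r ⬝ᵥ η *ᵥ v j]
    exact hη z hz hvar.1 hvar.2
  obtain ⟨⟨dx, dv⟩, hL⟩ := ht
  obtain ⟨D, hDm, hDx, hDv⟩ := hD dx dv
  have hmem : η + φ.map D ∈ annMat i d S x v := by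
    intro j r hr hd
    have h1 := map_dotProduct_mulVec hDm (x (i j) r) φ (v j)
    rw [hφ j r hr hd, map_zero] at h1
    have h2 := congrFun hL (j, r)
    have hm : mask j r = 1 := by simp [mask, hr, hd]
    simp only [L, t, LinearMap.coe_mk, AddHom.coe_mk, hm, one_mul] at h2
    have e1 : (D ∘ x (i j) r) = dx (i j) r := funext fun q => hDx _ _ _
    have e2 : (D ∘ v j) = dv j := funext fun p => hDv _ _
    rw [e1, e2] at h1
    rw [add_mulVec, dotProduct_add, ← h2, h1]
    ring
  have h1 := hgen _ hmem y u hy hu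
  have h2 := map_dotProduct_mulVec hDm y φ u
  rw [hu, dotProduct_zero, map_zero, dotProduct_zero, zero_add, dotProduct_mulVec y φ, hy,
    zero_dotProduct, add_zero] at h2
  rwa [add_mulVec, dotProduct_add, ← h2, add_zero] at h1

/-- The inductive step of the generic independence of the rank one matrices. -/
theorem generic_indep_step [Finite ι] [Infinite K] (i : J → ι) (d : J → ℕ)
    (S : ι → Finset (Fin n)) (x : ι → Fin n → Fin b → K) (v : J → ν → K)
    (hx : ∀ i₀ (a : Fin n → K), (∀ r, a r ≠ 0 → r ∈ S i₀) → ∑ r, a r • x i₀ r = 0 → a = 0)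
    (hspan : ∀ i₀ (y : Fin b → K), ∃ a : Fin n → K, (∀ r, a r ≠ 0 → r ∈ S i₀) ∧
      ∑ r, a r • x i₀ r = y)
    (hD : ∀ (dx : ι → Fin n → Fin b → K) (dv : J → ν → K), ∃ D : K →+ K,
      (∀ a b, D (a * b) = a * D b + b * D a) ∧ (∀ i₀ r q, D (x i₀ r q) = dx i₀ r q) ∧
      ∀ j p, D (v j p) = dv j p)
    (hcount : ∑ j, ((S (i j)).filter fun r : Fin n => (r : ℕ) < d j).card ≤ b * Fintype.card ν)
    (hIH : ∀ b' < b, ∀ (S₁ : ι → Finset (Fin n)) (c : ι → Matrix (Fin n) (Fin n) K)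
      (T : Submodule K (Fin b → K)), Module.finrank K T = b' → (∀ i₀, S₁ i₀ ⊆ S i₀) →
      (∀ i₀, (S₁ i₀).card = b') → (∀ i₀ r, c i₀ r r = 1) → (∀ i₀ r r', r < r' → c i₀ r r' = 0) →
      (∀ i₀, ∀ r ∈ S i₀, ∀ r' ∉ S i₀, c i₀ r r' = 0) →
      (∀ i₀, ∀ r ∈ S₁ i₀, ∑ r', c i₀ r r' • x i₀ r' ∈ T) →
      ∃ y : ι → Fin n → Fin b' → K, ∀ z ∈ rowSupport K i d S₁, comb i y v z = 0 → z = 0) :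
    ∀ z ∈ rowSupport K i d S, comb i x v z = 0 → z = 0 := by
  classical
  intro z₀ hz₀ hc₀
  by_contra hne
  obtain ⟨φ, hφ, hgen⟩ := exists_generic_mem (annMat i d S x v)
  have hφ0 : φ ≠ 0 := by
    rintro rfl
    apply annMat_ne_bot i d S x v (by simpa using hcount) hz₀ hne hc₀
    rw [eq_bot_iff]
    intro ψ hψ
    rw [Submodule.mem_bot]
    ext q p
    have := hgen ψ hψ (Pi.single q 1) (Pi.single p 1)
      (Matrix.vecMul_zero _) (Matrix.zero_mulVec _)
    simpa using this
  let T : Submodule K (Fin b → K) := LinearMap.ker φ.vecMulLinear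
  let N : Submodule K (ν → K) := LinearMap.ker φ.mulVecLin
  have hTb : Module.finrank K T < b := by
    have hT : T ≠ ⊤ := by
      intro hT
      apply hφ0
      ext q p
      have : (Pi.single q 1 : Fin b → K) ∈ T := by rw [hT]; trivial
      have h : (Pi.single q 1 : Fin b → K) ᵥ* φ = 0 := this
      have := congrFun h p
      simpa using this
    simpa using Submodule.finrank_lt hT
  choose S₁ c hS₁ hc1 hc2 hc3 hcT had using fun i₀ => exists_adapted (x i₀) (S i₀) T
  let x' : ι → Fin n → Fin b → K := fun i₀ r => ∑ r', c i₀ r r' • x i₀ r'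
  have hx' : ∀ i₀ (a : Fin n → K), (∀ r, a r ≠ 0 → r ∈ S₁ i₀) → ∑ r, a r • x' i₀ r = 0 → a = 0 :=
    fun i₀ a ha h => indep_of_unitriangular (hx i₀) (hc1 i₀) (hc2 i₀) (hc3 i₀) a
      (fun r hr => hS₁ i₀ (ha r hr)) h
  have hcard : ∀ i₀, (S₁ i₀).card = Module.finrank K T := by
    intro i₀
    refine card_eq_finrank_of_indep T (x := x' i₀) (hcT i₀) (hx' i₀) fun y hy => ?_
    obtain ⟨a, ha, rfl⟩ := hspan i₀ y
    obtain ⟨a', ha', h⟩ := had i₀ n a (fun r hr => ⟨ha r hr, r.2⟩) hy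
    exact ⟨a', fun r hr => (ha' r hr).1, h⟩
  obtain ⟨y, hy⟩ := hIH _ hTb S₁ c T rfl hS₁ hcard hc1 hc2 hc3 hcT
  let Z : Submodule K (J → Fin n → K) :=
    rowSupport K i d S₁ ⊓ ⨅ (i₀ : ι) (r : Fin n),
      LinearMap.ker (φ.mulVecLin ∘ₗ ∑ j, if i j = i₀ then
        (LinearMap.toSpanSingleton K (ν → K) (v j)) ∘ₗ LinearMap.proj r ∘ₗ
          (LinearMap.proj j : (J → Fin n → K) →ₗ[K] (Fin n → K)) else 0)
  have hZ : ∀ z, z ∈ Z ↔ z ∈ rowSupport K i d S₁ ∧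
      ∀ i₀ r, φ *ᵥ (∑ j, if i j = i₀ then z j r • v j else 0) = 0 := by
    intro z
    simp only [Z, Submodule.mem_inf, Submodule.mem_iInf, LinearMap.mem_ker]
    refine and_congr Iff.rfl (forall_congr' fun i₀ => forall_congr' fun r => ?_)
    rw [LinearMap.comp_apply, LinearMap.sum_apply]
    have : ∀ j, ((if i j = i₀ then
        (LinearMap.toSpanSingleton K (ν → K) (v j)) ∘ₗ LinearMap.proj r ∘ₗ
          (LinearMap.proj j : (J → Fin n → K) →ₗ[K] (Fin n → K)) else 0) :
          (J → Fin n → K) →ₗ[K] (ν → K)) z = if i j = i₀ then z j r • v j else 0 := by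
      intro j
      split_ifs <;> simp
    simp only [this]
    rfl
  let μ : Z →ₗ[K] Matrix (Fin b) ν K := (comb i x' v).domRestrict Z
  have hconv : ∀ z ∈ rowSupport K i d S, (∀ j, (∑ r, z j r • x (i j) r) ᵥ* φ = 0) →
      (∀ i₀ r, φ *ᵥ (∑ j, if i j = i₀ then z j r • v j else 0) = 0) →
      ∃ z' : Z, (∀ j, ∑ r, (z' : J → Fin n → K) j r • x' (i j) r = ∑ r, z j r • x (i j) r) ∧
        μ z' = comb i x v z := by
    intro z hz hzl hzr
    obtain ⟨z', h1, h2, h3, h4⟩ := exists_adapted_system hx' (fun i₀ => had i₀) hz hzl hzr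
    exact ⟨⟨z', (hZ z').2 ⟨h1, h3⟩⟩, h2, h4⟩
  have hrange : ∀ (y₀ : Fin b → K) (u : ν → K), y₀ ∈ T → u ∈ N →
      vecMulVec y₀ u ∈ LinearMap.range μ := by
    intro y₀ u hy₀ hu
    by_contra hnot
    obtain ⟨f, hf, hle⟩ := Submodule.exists_le_ker_of_notMem hnot
    obtain ⟨η, hη⟩ := exists_matrix_of_dual f
    apply hf
    have h0 := pairing_eq_zero_of_generic hD hφ hgen η (fun z hz hzl hzr => by
      rw [sum_mul_dotProduct_mulVec, ← hη]
      obtain ⟨z', -, h⟩ := hconv z hz hzl hzr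
      rw [← h]
      exact hle ⟨z', rfl⟩) y₀ u hy₀ hu
    rw [hη, ← h0]
    simp only [dotProduct, mulVec, Finset.mul_sum, vecMulVec_apply]
    refine Finset.sum_congr rfl fun q _ => Finset.sum_congr rfl fun p _ => ?_
    ring
  let B := Module.finBasis K T
  let κ : (Fin (Module.finrank K T) → N) →ₗ[K] Matrix (Fin b) ν K :=
    { toFun := fun w => ∑ k, vecMulVec (B k : Fin b → K) (w k : ν → K)
      map_add' := by intro w w'; simp [vecMulVec_add, Finset.sum_add_distrib]
      map_smul' := by intro a w; simp [vecMulVec_smul, Finset.smul_sum] }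
  have hκ : Function.Injective κ := by
    rw [← LinearMap.ker_eq_bot, eq_bot_iff]
    intro w hw
    rw [Submodule.mem_bot]
    funext k
    apply Subtype.ext
    funext p
    have h1 : ∑ k, (w k : ν → K) p • B k = 0 := by
      apply Subtype.ext
      funext q
      have := congrFun (congrFun (show κ w = 0 from hw) q) p
      simp only [κ, LinearMap.coe_mk, AddHom.coe_mk, Matrix.sum_apply, vecMulVec_apply,
        Matrix.zero_apply] at this
      simpa [mul_comm] using this
    exact (Fintype.linearIndependent_iff.1 B.linearIndependent) _ h1 k
  have hκμ : LinearMap.range κ ≤ LinearMap.range μ := by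
    rintro _ ⟨w, rfl⟩
    change ∑ k, vecMulVec (B k : Fin b → K) (w k : ν → K) ∈ _
    exact Submodule.sum_mem _ fun k _ => hrange _ _ (B k).2 (w k).2
  let νm : Z →ₗ[K] (Fin (Module.finrank K T) → N) := LinearMap.pi fun q =>
    LinearMap.codRestrict N
      ((LinearMap.pi fun p => (LinearMap.proj p ∘ₗ LinearMap.proj q ∘ₗ (comb i y v) :
        (J → Fin n → K) →ₗ[K] K)) ∘ₗ Z.subtype) (by
      rintro ⟨z, hz⟩
      have hz' := ((hZ z).1 hz).2
      have := Fintype.ofFinite ι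
      have : (fun p => comb i y v z q p) =
          ∑ i₀, ∑ r, y i₀ r q • ∑ j, if i j = i₀ then z j r • v j else 0 := by
        funext p
        rw [comb_apply]
        simp only [Finset.sum_apply, Pi.smul_apply, smul_eq_mul, Finset.mul_sum]
        simp only [apply_ite (fun f : ν → K => f p), Pi.smul_apply, Pi.zero_apply, smul_eq_mul,
          mul_ite, mul_zero]
        rw [Finset.sum_comm]
        rw [Finset.sum_comm (s := (Finset.univ : Finset ι))]
        refine Finset.sum_congr rfl fun r _ => ?_
        rw [Finset.sum_comm]
        refine Finset.sum_congr rfl fun j _ => ?_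
        rw [Finset.sum_ite_eq]
        simp
        ring
      change (fun p => comb i y v z q p) ∈ N
      rw [this]
      exact Submodule.sum_mem _ fun i₀ _ => Submodule.sum_mem _ fun r _ =>
        N.smul_mem _ (hz' i₀ r))
  have hν : Function.Injective νm := by
    rw [← LinearMap.ker_eq_bot, eq_bot_iff]
    rintro ⟨z, hz⟩ hw
    rw [Submodule.mem_bot]
    apply Subtype.ext
    refine hy z ((hZ z).1 hz).1 ?_
    ext q p
    exact congrFun (congrArg Subtype.val (congrFun (show νm ⟨z, hz⟩ = 0 from hw) q)) p
  have hle : Module.finrank K Z ≤ Module.finrank K (LinearMap.range μ) :=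
    calc Module.finrank K Z ≤ Module.finrank K (Fin (Module.finrank K T) → N) :=
          LinearMap.finrank_le_finrank_of_injective hν
      _ = Module.finrank K (LinearMap.range κ) := (LinearMap.finrank_range_of_inj hκ).symm
      _ ≤ _ := Submodule.finrank_mono hκμ
  have hker : LinearMap.ker μ = ⊥ := by
    have := LinearMap.finrank_range_add_finrank_ker μ
    exact Submodule.finrank_eq_zero.1 (by omega)
  have hvar := mem_kernels_of_variations i x v φ z₀ (fun dx dv => by
    obtain ⟨D, hDm, hDx, hDv⟩ := hD dx dv
    have h0 : ∑ j, ∑ r, z₀ j r * (x (i j) r ⬝ᵥ φ.map D *ᵥ v j) = 0 := by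
      rw [sum_mul_dotProduct_mulVec, hc₀]; simp
    rw [← neg_eq_zero, ← h0, ← Finset.sum_neg_distrib]
    refine Finset.sum_congr rfl fun j _ => ?_
    rw [← Finset.sum_neg_distrib]
    refine Finset.sum_congr rfl fun r _ => ?_
    by_cases hzr : z₀ j r = 0
    · simp [hzr]
    have hr := hz₀ j r hzr
    have h1 := map_dotProduct_mulVec hDm (x (i j) r) φ (v j)
    rw [hφ j r hr.1 hr.2, map_zero] at h1
    have e1 : (D ∘ x (i j) r) = dx (i j) r := funext fun q => hDx _ _ _
    have e2 : (D ∘ v j) = dv j := funext fun p => hDv _ _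
    rw [e1, e2] at h1
    linear_combination (z₀ j r) * h1)
  obtain ⟨z', h1, h2⟩ := hconv z₀ hz₀ hvar.1 hvar.2
  have hz' : z' = 0 := by
    rw [← Submodule.mem_bot K, ← hker, LinearMap.mem_ker, h2, hc₀]
  apply hne
  funext j
  refine hx (i j) (z₀ j) (fun r hr => (hz₀ j r hr).1) ?_
  rw [← h1 j, hz']
  simp

end Step

section Lead

variable {n : ℕ} {A B : Type*} [CommRing A] [CommRing B]

/-- The leading principal minor of size `d`. -/
def lead (d : ℕ) (g : Matrix (Fin n) (Fin n) A) : A :=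
  (g.submatrix (Subtype.val : {r : Fin n // (r : ℕ) < d} → Fin n) Subtype.val).det

theorem card_lt_eq {d : ℕ} (hd : d ≤ n) : Fintype.card {r : Fin n // (r : ℕ) < d} = d := by
  rw [Fintype.card_subtype]
  have : (Finset.univ.filter fun r : Fin n => (r : ℕ) < d) =
      Finset.univ.map (Fin.castLEEmb hd) := by
    ext r
    simp only [Finset.mem_filter, Finset.mem_univ, true_and, Finset.mem_map, Fin.castLEEmb_apply]
    constructor
    · intro h; exact ⟨⟨r, h⟩, rfl⟩
    · rintro ⟨k, rfl⟩; exact k.2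
  rw [this, Finset.card_map, Finset.card_univ, Fintype.card_fin]

theorem lead_map (f : A →+* B) (d : ℕ) (g : Matrix (Fin n) (Fin n) A) :
    lead d (g.map f) = f (lead d g) := by
  rw [lead, lead, RingHom.map_det]
  rfl

theorem lead_smul {d : ℕ} (hd : d ≤ n) (a : A) (g : Matrix (Fin n) (Fin n) A) :
    lead d (a • g) = a ^ d * lead d g := by
  rw [lead, Matrix.submatrix_smul, Pi.smul_apply, Pi.smul_apply, Matrix.det_smul, card_lt_eq hd,
    lead]

theorem lead_lower_mul (d : ℕ) {c : Matrix (Fin n) (Fin n) A}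
    (hc : ∀ r r', r < r' → c r r' = 0) (g : Matrix (Fin n) (Fin n) A) :
    lead d (c * g) = (∏ r : {r : Fin n // (r : ℕ) < d}, c r r) * lead d g := by
  have h : (c * g).submatrix (Subtype.val : {r : Fin n // (r : ℕ) < d} → Fin n)
        (Subtype.val : {r : Fin n // (r : ℕ) < d} → Fin n) =
      c.submatrix (Subtype.val : {r : Fin n // (r : ℕ) < d} → Fin n)
        (Subtype.val : {r : Fin n // (r : ℕ) < d} → Fin n) *
      g.submatrix (Subtype.val : {r : Fin n // (r : ℕ) < d} → Fin n)
        (Subtype.val : {r : Fin n // (r : ℕ) < d} → Fin n) := by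
    ext r q
    simp only [Matrix.submatrix_apply, Matrix.mul_apply]
    rw [← Fintype.sum_subtype_add_sum_subtype (fun k : Fin n => (k : ℕ) < d)]
    rw [add_eq_left]
    refine Finset.sum_eq_zero fun k _ => ?_
    rw [hc r k (Fin.lt_def.2 (by have := r.2; have := k.2; omega)), zero_mul]
  rw [lead, h, Matrix.det_mul, Matrix.det_of_isLowerTriangular]
  · rfl
  · intro r r' hr
    exact hc _ _ hr

end Lead

section Function

variable {n m : ℕ} {ι J Λ : Type*} [Fintype J] [Fintype Λ]

/-- A combination of products of powers of leading minors of translates. -/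
noncomputable def leadSum (m : ℕ) (i : J → ι) (d : J → ℕ) (c : Λ → ℂ)
    (X : Λ → ι → Matrix (Fin n) (Fin n) ℂ)
    {A : Type*} [CommRing A] [Algebra ℂ A] (g : ι → Matrix (Fin n) (Fin n) A) : A :=
  ∑ l, algebraMap ℂ A (c l) *
    ∏ j, lead (d j) (g (i j) * (X l (i j)).map (algebraMap ℂ A)) ^ m

variable (i : J → ι) (d : J → ℕ) (c : Λ → ℂ) (X : Λ → ι → Matrix (Fin n) (Fin n) ℂ)
variable {A B : Type*} [CommRing A] [Algebra ℂ A] [CommRing B] [Algebra ℂ B]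

theorem leadSum_map (f : A →ₐ[ℂ] B) (g : ι → Matrix (Fin n) (Fin n) A) :
    leadSum m i d c X (fun i₀ => (g i₀).map f) = f (leadSum m i d c X g) := by
  simp only [leadSum, map_sum, map_mul, map_prod, map_pow, AlgHom.commutes]
  refine Finset.sum_congr rfl fun l _ => ?_
  congr 1
  refine Finset.prod_congr rfl fun j _ => ?_
  congr 1
  have h := lead_map (f : A →+* B) (d j) (g (i j) * (X l (i j)).map (algebraMap ℂ A))
  rw [Matrix.map_mul] at h
  refine Eq.trans ?_ h
  congr 2
  ext q p
  simp

theorem leadSum_lower_mul {b : ι → Matrix (Fin n) (Fin n) A}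
    (hb : ∀ i₀ r r', r < r' → b i₀ r r' = 0) (g : ι → Matrix (Fin n) (Fin n) A) :
    leadSum m i d c X (fun i₀ => b i₀ * g i₀) =
      (∏ j, ∏ r : {r : Fin n // (r : ℕ) < d j}, b (i j) r r) ^ m * leadSum m i d c X g := by
  simp only [leadSum, Finset.mul_sum]
  refine Finset.sum_congr rfl fun l _ => ?_
  simp only [Matrix.mul_assoc, lead_lower_mul _ (hb _), mul_pow, Finset.prod_mul_distrib,
    Finset.prod_pow]
  ring

variable {N : ℕ} {i d c X}

theorem leadSum_mul_right_complex [NeZero n] [Finite ι] (hd : ∀ j, d j ≤ n)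
    (hN : ∑ j, d j = n * N)
    (hSL : ∀ (g : ι → Matrix (Fin n) (Fin n) ℂ) (h : Matrix (Fin n) (Fin n) ℂ),
      (∀ i₀, (g i₀).det = 1) → h.det = 1 →
      leadSum m i d c X (fun i₀ => g i₀ * h) = leadSum m i d c X g)
    (g : ι → Matrix (Fin n) (Fin n) ℂ) (h : Matrix (Fin n) (Fin n) ℂ)
    (hg : ∀ i₀, (g i₀).det ≠ 0) (hh : h.det ≠ 0) :
    leadSum m i d c X (fun i₀ => g i₀ * h) = h.det ^ (m * N) * leadSum m i d c X g := by
  have hn : n ≠ 0 := NeZero.ne n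
  have hscale : ∀ M : Matrix (Fin n) (Fin n) ℂ, M.det ≠ 0 → ∃ (a : ℂ) (M' : Matrix _ _ ℂ),
      M'.det = 1 ∧ M = a • M' ∧ a ^ n = M.det := by
    intro M hM
    obtain ⟨a, ha⟩ := IsAlgClosed.exists_pow_nat_eq M.det (Nat.pos_of_ne_zero hn)
    have ha0 : a ≠ 0 := by rintro rfl; rw [zero_pow hn] at ha; exact hM ha.symm
    refine ⟨a, a⁻¹ • M, ?_, ?_, ha⟩
    · rw [Matrix.det_smul, Fintype.card_fin, inv_pow, ha, inv_mul_cancel₀ hM]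
    · rw [smul_smul, mul_inv_cancel₀ ha0, one_smul]
  choose a g' hg' hgg _ using fun i₀ => hscale (g i₀) (hg i₀)
  obtain ⟨e, h', hh', rfl, he⟩ := hscale h hh
  have hsm : ∀ (a : ι → ℂ) (g : ι → Matrix (Fin n) (Fin n) ℂ),
      leadSum m i d c X (fun i₀ => a i₀ • g i₀) =
        (∏ j, a (i j) ^ d j) ^ m * leadSum m i d c X g := by
    intro a g
    simp only [leadSum, Finset.mul_sum]
    refine Finset.sum_congr rfl fun l _ => ?_
    simp only [Matrix.smul_mul, lead_smul (hd _), mul_pow, Finset.prod_mul_distrib,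
      Finset.prod_pow]
    ring
  have h1 : (fun i₀ => g i₀ * (e • h')) = fun i₀ => e • (a i₀ • (g' i₀ * h')) := by
    funext i₀
    conv_lhs => rw [hgg i₀]
    simp
  have h2 : g = fun i₀ => a i₀ • g' i₀ := funext hgg
  rw [h1, hsm (fun _ => e), hsm a, hSL g' h' hg' hh', ← hsm a g', ← h2, ← he,
    Finset.prod_pow_eq_pow_sum, hN]
  ring

theorem leadSum_mul_right [NeZero n] [Fintype ι] (hd : ∀ j, d j ≤ n) (hN : ∑ j, d j = n * N)
    (hSL : ∀ (g : ι → Matrix (Fin n) (Fin n) ℂ) (h : Matrix (Fin n) (Fin n) ℂ),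
      (∀ i₀, (g i₀).det = 1) → h.det = 1 →
      leadSum m i d c X (fun i₀ => g i₀ * h) = leadSum m i d c X g)
    (g : ι → Matrix (Fin n) (Fin n) A) (h : Matrix (Fin n) (Fin n) A) :
    leadSum m i d c X (fun i₀ => g i₀ * h) = h.det ^ (m * N) * leadSum m i d c X g := by
  let τ := (ι × Fin n × Fin n) ⊕ (Fin n × Fin n)
  let G : ι → Matrix (Fin n) (Fin n) (MvPolynomial τ ℂ) :=
    fun i₀ => Matrix.of fun r q => MvPolynomial.X (Sum.inl (i₀, r, q))
  let H : Matrix (Fin n) (Fin n) (MvPolynomial τ ℂ) :=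
    Matrix.of fun r q => MvPolynomial.X (Sum.inr (r, q))
  have hdetH : H.det ≠ 0 := by
    intro h0
    have := congrArg (MvPolynomial.eval (Sum.elim (fun _ => 0)
      fun w : Fin n × Fin n => (1 : Matrix (Fin n) (Fin n) ℂ) w.1 w.2)) h0
    rw [RingHom.map_det, map_zero] at this
    have e : (MvPolynomial.eval (Sum.elim (fun _ => 0)
      fun w : Fin n × Fin n => (1 : Matrix (Fin n) (Fin n) ℂ) w.1 w.2)).mapMatrix H = 1 := by
      ext r q; simp [H]
    rw [e, det_one] at this
    exact one_ne_zero this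
  have hdetG : ∀ i₀, (G i₀).det ≠ 0 := by
    intro i₀ h0
    have := congrArg (MvPolynomial.eval (Sum.elim (fun w : ι × Fin n × Fin n =>
      (1 : Matrix (Fin n) (Fin n) ℂ) w.2.1 w.2.2) fun _ => 0)) h0
    rw [RingHom.map_det, map_zero] at this
    have e : (MvPolynomial.eval (Sum.elim (fun w : ι × Fin n × Fin n =>
      (1 : Matrix (Fin n) (Fin n) ℂ) w.2.1 w.2.2) fun _ => 0)).mapMatrix (G i₀) = 1 := by
      ext r q; simp [G]
    rw [e, det_one] at this
    exact one_ne_zero this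
  have key : leadSum m i d c X (fun i₀ => G i₀ * H) = H.det ^ (m * N) * leadSum m i d c X G := by
    have hprod : (∏ i₀, (G i₀).det) * H.det ≠ 0 :=
      mul_ne_zero (Finset.prod_ne_zero_iff.2 fun i₀ _ => hdetG i₀) hdetH
    apply mul_left_cancel₀ hprod
    apply MvPolynomial.funext
    intro pt
    let f : MvPolynomial τ ℂ →ₐ[ℂ] ℂ := MvPolynomial.aeval pt
    have hf : ∀ p, MvPolynomial.eval pt p = f p := fun p => by
      rw [MvPolynomial.aeval_eq_eval]
    simp only [hf, map_mul, map_prod, map_pow, ← leadSum_map]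
    have hGd : ∀ i₀, f (G i₀).det = ((G i₀).map f).det := fun i₀ => AlgHom.map_det f _
    have hHd : f H.det = (H.map f).det := AlgHom.map_det f _
    have hGH : ∀ i₀, (G i₀ * H).map f = (G i₀).map f * H.map f := fun i₀ => Matrix.map_mul
    simp only [hGd, hHd, hGH]
    by_cases h0 : (∏ i₀, ((G i₀).map f).det) * (H.map f).det = 0
    · rw [h0, zero_mul, zero_mul]
    · rw [leadSum_mul_right_complex hd hN hSL _ _
        (fun i₀ => Finset.prod_ne_zero_iff.1 (left_ne_zero_of_mul h0) i₀ (Finset.mem_univ _))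
        (right_ne_zero_of_mul h0)]
  let f : MvPolynomial τ ℂ →ₐ[ℂ] A := MvPolynomial.aeval
    (Sum.elim (fun w : ι × Fin n × Fin n => g w.1 w.2.1 w.2.2) fun w => h w.1 w.2)
  have hG : (fun i₀ => (G i₀).map f) = g := by
    funext i₀; ext r q; simp [G, f]
  have hH : H.map f = h := by
    ext r q; simp [H, f]
  have := congrArg f key
  rw [← leadSum_map, map_mul, map_pow, AlgHom.map_det, ← leadSum_map, hG] at this
  simp only [Matrix.map_mul] at this
  rw [AlgHom.mapMatrix_apply, hH] at this
  rw [← this, ← hG]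

end Function

section Generic

variable {n m N : ℕ} {ι J Λ : Type*} [Fintype J] [Fintype Λ]
variable {i : J → ι} {d : J → ℕ} {c : Λ → ℂ} {X : Λ → ι → Matrix (Fin n) (Fin n) ℂ}

/-- The weight inequality coming from a one-parameter subgroup. -/
theorem sum_card_le_of_leadSum_ne_zero {A : Type*} [CommRing A] [IsDomain A] [Algebra ℂ A]
    (hm : 0 < m)
    (hR : ∀ (g : ι → Matrix (Fin n) (Fin n) (Polynomial A)) (h : Matrix (Fin n) (Fin n) _),
      leadSum m i d c X (fun i₀ => g i₀ * h) = h.det ^ (m * N) * leadSum m i d c X g)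
    {b : ℕ} (hb : b ≤ n) (S : ι → Finset (Fin n)) (g : ι → Matrix (Fin n) (Fin n) A)
    (hg : ∀ i₀, ∀ r ∈ S i₀, ∀ q : Fin n, b ≤ (q : ℕ) → g i₀ r q = 0)
    (hQ : leadSum m i d c X g ≠ 0) :
    ∑ j, ((S (i j)).filter fun r : Fin n => (r : ℕ) < d j).card ≤ b * N := by
  classical
  by_contra hlt
  push Not at hlt
  apply hQ
  let h : Matrix (Fin n) (Fin n) (Polynomial A) :=
    diagonal fun q => if (q : ℕ) < b then Polynomial.X else 1
  let δ : ι → Matrix (Fin n) (Fin n) (Polynomial A) := fun i₀ =>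
    diagonal fun r => if r ∈ S i₀ then Polynomial.X else 1
  let g' : ι → Matrix (Fin n) (Fin n) (Polynomial A) := fun i₀ => Matrix.of fun r q =>
    if r ∈ S i₀ then Polynomial.C (g i₀ r q) else
      Polynomial.C (g i₀ r q) * if (q : ℕ) < b then Polynomial.X else 1
  have hgh : (fun i₀ => (g i₀).map (Polynomial.CAlgHom (R := ℂ)) * h) = fun i₀ => δ i₀ * g' i₀ := by
    funext i₀
    ext1 r q
    simp only [h, δ, g', mul_diagonal, diagonal_mul, Matrix.map_apply, Matrix.of_apply,
      Polynomial.CAlgHom_apply]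
    by_cases hr : r ∈ S i₀
    · by_cases hq : (q : ℕ) < b
      · rw [if_pos hq, if_pos hr, if_pos hr, mul_comm]
      · simp [hr, hq, hg i₀ r hr q (not_lt.1 hq)]
    · simp [hr]
  have hdet : h.det = Polynomial.X ^ b := by
    rw [det_diagonal, Finset.prod_ite, Finset.prod_const_one, mul_one, Finset.prod_const]
    congr 1
    rw [← Fintype.card_subtype, card_lt_eq hb]
  have hδ : (∏ j, ∏ r : {r : Fin n // (r : ℕ) < d j}, δ (i j) r r) =
      Polynomial.X ^ ∑ j, ((S (i j)).filter fun r : Fin n => (r : ℕ) < d j).card := by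
    rw [← Finset.prod_pow_eq_pow_sum]
    refine Finset.prod_congr rfl fun j _ => ?_
    have h1 : ∀ r : {r : Fin n // (r : ℕ) < d j}, δ (i j) r r =
        if (r : Fin n) ∈ S (i j) then Polynomial.X else 1 := by
      intro r; simp [δ]
    simp only [h1]
    rw [← Finset.prod_subtype (Finset.univ.filter fun r : Fin n => (r : ℕ) < d j) (by simp)
      (fun r => if r ∈ S (i j) then (Polynomial.X : Polynomial A) else 1)]
    rw [Finset.prod_ite, Finset.prod_const_one, mul_one, Finset.prod_const]
    congr 2
    ext r
    simp [and_comm]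
  have h1 := hR (fun i₀ => (g i₀).map (Polynomial.CAlgHom (R := ℂ))) h
  have hlow : ∀ i₀ (r r' : Fin n), r < r' → δ i₀ r r' = 0 := by
    intro i₀ r r' hr
    exact diagonal_apply_ne _ hr.ne
  rw [hgh, leadSum_lower_mul i d c X hlow, hδ, hdet, leadSum_map] at h1
  obtain ⟨k, hk⟩ := Nat.exists_eq_add_of_lt hlt
  rw [hk, ← pow_mul, ← pow_mul,
    show (b * N + k + 1) * m = b * (m * N) + ((k * m + (m - 1)) + 1) by
      have : m - 1 + 1 = m := by omega
      calc (b * N + k + 1) * m = b * (m * N) + k * m + m := by ring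
        _ = b * (m * N) + ((k * m + (m - 1)) + 1) := by omega,
    pow_add, mul_assoc] at h1
  have h2 := mul_left_cancel₀ (pow_ne_zero _ Polynomial.X_ne_zero) h1
  have h3 := congrArg (Polynomial.eval 0) h2
  simpa using h3.symm

/-- The variables: entries of matrices and of vectors. -/
abbrev Vars (ι J : Type*) (n N : ℕ) := (ι × Fin n × Fin n) ⊕ (J × Fin N)

variable (i d c X) in
/-- The function does not vanish identically on the matrices whose rows in `S` live in the first
`b` columns. -/
def Good (m N b : ℕ) (S : ι → Finset (Fin n)) : Prop :=
  leadSum m i d c X (fun i₀ => Matrix.of fun r q : Fin n =>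
    if r ∈ S i₀ ∧ b ≤ (q : ℕ) then 0 else
      (MvPolynomial.X (Sum.inl (i₀, r, q)) : MvPolynomial (Vars ι J n N) ℂ)) ≠ 0

theorem Good.of_point {A : Type*} [CommRing A] [Algebra ℂ A] {b : ℕ} {S : ι → Finset (Fin n)}
    (g : ι → Matrix (Fin n) (Fin n) A)
    (hg : ∀ i₀, ∀ r ∈ S i₀, ∀ q : Fin n, b ≤ (q : ℕ) → g i₀ r q = 0)
    (hQ : leadSum m i d c X g ≠ 0) : Good i d c X m N b S := by
  intro h0
  apply hQ
  let f : MvPolynomial (Vars ι J n N) ℂ →ₐ[ℂ] A := MvPolynomial.aeval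
    (Sum.elim (fun w : ι × Fin n × Fin n => g w.1 w.2.1 w.2.2) fun _ => 0)
  have := congrArg f h0
  rw [← leadSum_map, map_zero] at this
  rw [← this]
  congr 1
  funext i₀
  ext r q
  by_cases h : r ∈ S i₀ ∧ b ≤ (q : ℕ)
  · simp [h, hg i₀ r h.1 q h.2]
  · simp [h, f]

/-- A subspace of dimension `b` can be moved into the first `b` coordinates. -/
theorem exists_matrix_flatten {K : Type*} [Field K] (T : Submodule K (Fin n → K)) :
    ∃ h : Matrix (Fin n) (Fin n) K, h.det ≠ 0 ∧
      ∀ y ∈ T, ∀ q : Fin n, Module.finrank K T ≤ (q : ℕ) → (y ᵥ* h) q = 0 := by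
  classical
  obtain ⟨C, hC⟩ := Submodule.exists_isCompl T
  have hdim : Module.finrank K T + Module.finrank K C = n := by
    rw [Submodule.finrank_add_eq_of_isCompl hC]; simp
  let e : (Fin n → K) ≃ₗ[K] (Fin n → K) :=
    (Submodule.prodEquivOfIsCompl T C hC).symm ≪≫ₗ
      (LinearEquiv.prodCongr (Module.finBasis K T).equivFun (Module.finBasis K C).equivFun) ≪≫ₗ
      (LinearEquiv.sumArrowLequivProdArrow _ _ K K).symm ≪≫ₗ
      LinearEquiv.funCongrLeft K K ((finCongr hdim).symm.trans finSumFinEquiv.symm)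
  let h : Matrix (Fin n) (Fin n) K := LinearMap.toMatrixRight' e.toLinearMap
  have hv : ∀ y, y ᵥ* h = e y := by
    intro y
    have : Matrix.toLinearMapRight' h = e.toLinearMap := LinearMap.toMatrixRight'.symm_apply_apply _
    exact congrArg (fun f : (Fin n → K) →ₗ[K] (Fin n → K) => f y) this
  refine ⟨h, ?_, ?_⟩
  · rw [← isUnit_iff_ne_zero, ← Matrix.isUnit_iff_isUnit_det, ← Matrix.vecMul_injective_iff_isUnit]
    intro y y' hy
    exact e.injective ((hv y).symm.trans (Eq.trans hy (hv y')))
  · intro y hy q hq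
    rw [hv]
    have h1 : (Submodule.prodEquivOfIsCompl T C hC).symm y = (⟨y, hy⟩, 0) := by
      rw [LinearEquiv.symm_apply_eq]; simp
    have h2 : finSumFinEquiv.symm ((finCongr hdim).symm q) =
        Sum.inr (⟨(q : ℕ) - Module.finrank K T, by omega⟩ : Fin (Module.finrank K C)) := by
      rw [Equiv.symm_apply_eq]
      ext
      simp
      omega
    simp only [e, LinearEquiv.trans_apply, h1, LinearEquiv.funCongrLeft_apply,
      LinearMap.funLeft_apply, Equiv.trans_apply, h2]
    simp

end Generic

section Generic

theorem indep_and_span_of_det_ne_zero {K : Type*} [Field K] {n b : ℕ} (x : Fin n → Fin b → K)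
    (S : Finset (Fin n)) (e : Fin b ≃ S)
    (hdet : (Matrix.of fun k q => x (e k) q : Matrix (Fin b) (Fin b) K).det ≠ 0) :
    (∀ a : Fin n → K, (∀ r, a r ≠ 0 → r ∈ S) → ∑ r, a r • x r = 0 → a = 0) ∧
      ∀ y : Fin b → K, ∃ a : Fin n → K, (∀ r, a r ≠ 0 → r ∈ S) ∧ ∑ r, a r • x r = y := by
  classical
  set M : Matrix (Fin b) (Fin b) K := Matrix.of fun k q => x (e k) q with hM
  have hu : IsUnit M := (Matrix.isUnit_iff_isUnit_det M).2 (isUnit_iff_ne_zero.2 hdet)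
  have hsum : ∀ a : Fin n → K, (∀ r, a r ≠ 0 → r ∈ S) →
      ∑ r, a r • x r = (fun k => a (e k)) ᵥ* M := by
    intro a ha
    rw [Matrix.vecMul_eq_sum]
    have h1 : ∑ k, (fun k => a (e k)) k • M k = ∑ r : S, a r • x r :=
      Equiv.sum_comp e (fun r : S => a r • x r)
    rw [h1, Finset.sum_coe_sort S (fun r => a r • x r)]
    refine (Finset.sum_subset (Finset.subset_univ _) fun r _ hr => ?_).symm
    have : a r = 0 := by
      by_contra h
      exact hr (ha r h)
    simp [this]
  constructor
  · intro a ha h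
    rw [hsum a ha] at h
    have h0 : (fun k => a (e k)) = 0 :=
      Matrix.vecMul_injective_iff_isUnit.2 hu (by simpa using h)
    funext r
    by_contra hr
    have hrS := ha r hr
    have := congrFun h0 (e.symm ⟨r, hrS⟩)
    simp at this
    exact hr this
  · intro y
    obtain ⟨a, ha⟩ := Matrix.vecMul_surjective_iff_isUnit.2 hu y
    have hsupp : ∀ r, (if h : r ∈ S then a (e.symm ⟨r, h⟩) else 0) ≠ 0 → r ∈ S := by
      intro r h
      by_contra h'
      simp [h'] at h
    refine ⟨fun r => if h : r ∈ S then a (e.symm ⟨r, h⟩) else 0, hsupp, ?_⟩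
    rw [hsum _ hsupp, ← ha]
    congr 1
    funext k
    simp

variable {n m N : ℕ} {ι J Λ : Type*} [Fintype J] [Fintype Λ]

/-- The field of rational functions in all the variables. -/
abbrev GenField (ι J : Type*) (n N : ℕ) := FractionRing (MvPolynomial (Vars ι J n N) ℂ)

/-- The generic row vectors with `b` entries. -/
noncomputable def genRow (J : Type*) (N : ℕ) {b : ℕ} (hb : b ≤ n) (i₀ : ι) (r : Fin n)
    (q : Fin b) : GenField ι J n N :=
  algebraMap (MvPolynomial (Vars ι J n N) ℂ) _ (MvPolynomial.X (Sum.inl (i₀, r, Fin.castLE hb q)))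

/-- The generic auxiliary vectors. -/
noncomputable def genVec (ι : Type*) (n : ℕ) (j : J) (p : Fin N) : GenField ι J n N :=
  algebraMap (MvPolynomial (Vars ι J n N) ℂ) _ (MvPolynomial.X (Sum.inr (j, p)))

omit [Fintype J] in
theorem genRow_det_ne_zero {b : ℕ} (hb : b ≤ n) (S : Finset (Fin n)) (e : Fin b ≃ S) (i₀ : ι) :
    (Matrix.of fun k q => genRow J N hb i₀ (e k : Fin n) q :
      Matrix (Fin b) (Fin b) (GenField ι J n N)).det ≠ 0 := by
  classical
  let M : Matrix (Fin b) (Fin b) (MvPolynomial (Vars ι J n N) ℂ) :=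
    Matrix.of fun k q => MvPolynomial.X (Sum.inl (i₀, (e k : Fin n), Fin.castLE hb q))
  have h1 : (Matrix.of fun k q => genRow J N hb i₀ (e k : Fin n) q :
      Matrix (Fin b) (Fin b) (GenField ι J n N)) = (algebraMap _ _).mapMatrix M := rfl
  rw [h1, ← RingHom.map_det]
  intro h0
  rw [map_eq_zero_iff _ (IsFractionRing.injective _ _)] at h0
  have h2 := congrArg (MvPolynomial.eval (Sum.elim (fun w : ι × Fin n × Fin n =>
    if h : w.2.1 ∈ S then (if (e.symm ⟨w.2.1, h⟩ : ℕ) = w.2.2 then (1 : ℂ) else 0) else 0)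
    fun _ => 0)) h0
  rw [RingHom.map_det, map_zero] at h2
  refine one_ne_zero (α := ℂ) ?_
  rw [← h2, ← Matrix.det_one (n := Fin b)]
  congr 1
  ext k q
  simp [M, Matrix.one_apply, Fin.ext_iff]

variable {i : J → ι} {d : J → ℕ} {c : Λ → ℂ} {X : Λ → ι → Matrix (Fin n) (Fin n) ℂ}

/-- Independence of the generic rank one matrices. -/
theorem generic_indep [NeZero n] [Fintype ι] (hm : 0 < m) (hd : ∀ j, d j ≤ n)
    (hN : ∑ j, d j = n * N)
    (hSL : ∀ (g : ι → Matrix (Fin n) (Fin n) ℂ) (h : Matrix (Fin n) (Fin n) ℂ),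
      (∀ i₀, (g i₀).det = 1) → h.det = 1 →
      leadSum m i d c X (fun i₀ => g i₀ * h) = leadSum m i d c X g)
    (b : ℕ) (hb : b ≤ n) (S : ι → Finset (Fin n)) (hS : ∀ i₀, (S i₀).card = b)
    (hgood : Good i d c X m N b S) :
    ∀ z ∈ rowSupport (GenField ι J n N) i d S,
      comb i (genRow J N hb) (genVec (N := N) ι n) z = 0 → z = 0 := by
  classical
  induction b using Nat.strong_induction_on generalizing S with
  | _ b ih =>
  have : Infinite (GenField ι J n N) :=
    Infinite.of_injective _ (IsFractionRing.injective (MvPolynomial (Vars ι J n N) ℂ) _)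
  have hxs := fun i₀ => indep_and_span_of_det_ne_zero (genRow J N hb i₀) (S i₀)
    ((S i₀).equivFinOfCardEq (hS i₀)).symm (genRow_det_ne_zero hb (S i₀) _ i₀)
  refine generic_indep_step i d S _ _ (fun i₀ => (hxs i₀).1) (fun i₀ => (hxs i₀).2) ?_ ?_ ?_
  · intro dx dv
    obtain ⟨D, hD, hf⟩ := exists_derivation (K := GenField ι J n N)
      (Sum.elim (fun w : ι × Fin n × Fin n =>
        if h : (w.2.2 : ℕ) < b then dx w.1 w.2.1 ⟨w.2.2, h⟩ else 0) fun w : J × Fin N => dv w.1 w.2)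
    refine ⟨D, hD, fun i₀ r q => ?_, fun j p => ?_⟩
    · rw [genRow, hf]
      simp
    · rw [genVec, hf]
      simp
  · rw [Fintype.card_fin]
    refine sum_card_le_of_leadSum_ne_zero hm (fun g h => leadSum_mul_right hd hN hSL g h) hb S _ ?_
      hgood
    intro i₀ r hr q hq
    simp [hr, hq]
  · intro b' hb' S₁ C T hT hS₁ hcard hC1 hC2 hC3 hCT
    refine ⟨genRow J N (hb'.le.trans hb), ih b' hb' _ S₁ hcard ?_⟩
    let E : (Fin b → GenField ι J n N) →ₗ[GenField ι J n N] (Fin n → GenField ι J n N) :=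
      { toFun := fun y q => if h : (q : ℕ) < b then y ⟨q, h⟩ else 0
        map_add' := by
          intro y y'; funext q
          by_cases h : (q : ℕ) < b <;> simp [h]
        map_smul' := by
          intro a y; funext q
          by_cases h : (q : ℕ) < b <;> simp [h] }
    have hE : Function.Injective E := by
      intro y y' h
      funext q
      have := congrFun h (Fin.castLE hb q)
      simpa [E] using this
    obtain ⟨h, hh, hhT⟩ := exists_matrix_flatten (T.map E)
    have hfr : Module.finrank (GenField ι J n N) (T.map E) = b' := by
      rw [← hT]
      exact (LinearEquiv.finrank_eq (Submodule.equivMapOfInjective E hE T)).symm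
    let P : ι → Matrix (Fin n) (Fin n) (MvPolynomial (Vars ι J n N) ℂ) := fun i₀ =>
      Matrix.of fun r q : Fin n => if r ∈ S i₀ ∧ b ≤ (q : ℕ) then 0 else
        MvPolynomial.X (Sum.inl (i₀, r, q))
    let f : MvPolynomial (Vars ι J n N) ℂ →ₐ[ℂ] GenField ι J n N :=
      IsScalarTower.toAlgHom ℂ _ _
    refine Good.of_point (A := GenField ι J n N) (fun i₀ => C i₀ * ((P i₀).map f * h)) ?_ ?_
    · intro i₀ r hr q hq
      have h1 : (C i₀ * ((P i₀).map f * h)) r q =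
          (E (∑ r', C i₀ r r' • genRow J N hb i₀ r') ᵥ* h) q := by
        rw [← Matrix.mul_assoc, Matrix.mul_apply, vecMul, dotProduct]
        refine Finset.sum_congr rfl fun q' _ => ?_
        congr 1
        rw [Matrix.mul_apply]
        by_cases hq' : (q' : ℕ) < b
        · simp only [E, LinearMap.coe_mk, AddHom.coe_mk, hq', dif_pos, Finset.sum_apply,
            Pi.smul_apply, smul_eq_mul]
          refine Finset.sum_congr rfl fun r' _ => ?_
          congr 1
          simp [P, not_le.2 hq', f, genRow]
        · simp only [E, LinearMap.coe_mk, AddHom.coe_mk, hq', dif_neg, not_false_iff]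
          refine Finset.sum_eq_zero fun r' _ => ?_
          by_cases hr' : r' ∈ S i₀
          · simp [P, hr', not_lt.1 hq']
          · rw [hC3 i₀ r (hS₁ i₀ hr) r' hr', zero_mul]
      rw [h1]
      exact hhT _ ⟨_, hCT i₀ r hr, rfl⟩ q (by rw [hfr]; exact hq)
    · rw [leadSum_lower_mul i d c X hC2, leadSum_mul_right hd hN hSL, leadSum_map]
      refine mul_ne_zero ?_ (mul_ne_zero (pow_ne_zero _ hh) ?_)
      · simp [hC1]
      · intro h0
        apply hgood
        exact (map_eq_zero_iff f (IsFractionRing.injective _ _)).1 h0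

end Generic

section Determinant

variable {n N : ℕ} {ι J : Type*}

/-- The index set of the rows. -/
abbrev Rows (n : ℕ) (d : J → ℕ) := Σ j : J, {r : Fin n // (r : ℕ) < d j}

theorem card_rows [Fintype J] {d : J → ℕ} (hd : ∀ j, d j ≤ n) (hN : ∑ j, d j = n * N) :
    Fintype.card (Rows n d) = Fintype.card (Fin n × Fin N) := by
  rw [Fintype.card_sigma, Finset.sum_congr rfl fun j _ => card_lt_eq (hd j), hN]
  simp

/-- The matrix whose rows are the rank one matrices `g_{i j}(r) ⊗ v_j`, `r < d j`. -/
def rowMat (i : J → ι) (d : J → ℕ) {A : Type*} [CommRing A] (g : ι → Matrix (Fin n) (Fin n) A)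
    (v : J → Fin N → A) : Matrix (Rows n d) (Fin n × Fin N) A :=
  Matrix.of fun w w' => g (i w.1) w.2 w'.1 * v w.1 w'.2

variable [Fintype J] [DecidableEq J]

/-- The determinant of the square matrix `rowMat`. -/
def rowDet (i : J → ι) (d : J → ℕ) (e : Rows n d ≃ Fin n × Fin N) {A : Type*} [CommRing A]
    (g : ι → Matrix (Fin n) (Fin n) A) (v : J → Fin N → A) : A :=
  ((rowMat i d g v).submatrix id e).det

theorem rowDet_map (i : J → ι) (d : J → ℕ) (e : Rows n d ≃ Fin n × Fin N) {A B : Type*}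
    [CommRing A] [CommRing B] (f : A →+* B) (g : ι → Matrix (Fin n) (Fin n) A)
    (v : J → Fin N → A) :
    rowDet i d e (fun i₀ => (g i₀).map f) (fun j p => f (v j p)) = f (rowDet i d e g v) := by
  rw [rowDet, rowDet, RingHom.map_det]
  congr 1
  ext w w'
  simp [rowMat]

theorem rowDet_mul_right (i : J → ι) (d : J → ℕ) (e : Rows n d ≃ Fin n × Fin N) {A : Type*}
    [CommRing A] (g : ι → Matrix (Fin n) (Fin n) A) (v : J → Fin N → A)
    (h : Matrix (Fin n) (Fin n) A) :
    rowDet i d e (fun i₀ => g i₀ * h) v = rowDet i d e g v * h.det ^ N := by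
  have h1 : (rowMat i d (fun i₀ => g i₀ * h) v) =
      rowMat i d g v * Matrix.kroneckerMap (· * ·) h (1 : Matrix (Fin N) (Fin N) A) := by
    ext w w'
    rw [Matrix.mul_apply, Fintype.sum_prod_type]
    simp only [rowMat, Matrix.of_apply, Matrix.kroneckerMap_apply, Matrix.mul_apply, Finset.sum_mul]
    refine Finset.sum_congr rfl fun q _ => ?_
    rw [Finset.sum_eq_single w'.2]
    · simp; ring
    · intro p _ hp; simp [Matrix.one_apply_ne hp]
    · simp
  rw [rowDet, h1, ← Matrix.submatrix_mul_equiv _ _ id e e, Matrix.det_mul, ← rowDet,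
    Matrix.det_submatrix_equiv_self, Matrix.det_kronecker]
  simp

theorem rowDet_smul [Fintype ι] (i : J → ι) {d : J → ℕ} (hd : ∀ j, d j ≤ n)
    (e : Rows n d ≃ Fin n × Fin N)
    {A : Type*} [CommRing A] (a : ι → A) (g : ι → Matrix (Fin n) (Fin n) A) (v : J → Fin N → A) :
    rowDet i d e (fun i₀ => a i₀ • g i₀) v = (∏ j, a (i j) ^ d j) * rowDet i d e g v := by
  have h1 : ((rowMat i d (fun i₀ => a i₀ • g i₀) v).submatrix id e) =
      Matrix.of fun w w' => a (i w.1) * ((rowMat i d g v).submatrix id e) w w' := by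
    ext w w'
    simp [rowMat, mul_assoc]
  rw [rowDet, h1, Matrix.det_mul_column, ← rowDet, Fintype.prod_sigma]
  congr 1
  refine Finset.prod_congr rfl fun j _ => ?_
  simp [card_lt_eq (hd j)]

theorem exists_smul_det_eq_one [NeZero n] {M : Matrix (Fin n) (Fin n) ℂ} (hM : M.det ≠ 0) :
    ∃ (a : ℂ) (M' : Matrix (Fin n) (Fin n) ℂ), a ≠ 0 ∧ M'.det = 1 ∧ M = a • M' := by
  have hn : n ≠ 0 := NeZero.ne n
  obtain ⟨a, ha⟩ := IsAlgClosed.exists_pow_nat_eq M.det (Nat.pos_of_ne_zero hn)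
  have ha0 : a ≠ 0 := by rintro rfl; rw [zero_pow hn] at ha; exact hM ha.symm
  refine ⟨a, a⁻¹ • M, ha0, ?_, ?_⟩
  · rw [Matrix.det_smul, Fintype.card_fin, inv_pow, ha, inv_mul_cancel₀ hM]
  · rw [smul_smul, mul_inv_cancel₀ ha0, one_smul]

/-- A polynomial condition satisfied generically is satisfied at a point. -/
theorem exists_rowDet_ne_zero [NeZero n] [Fintype ι] (i : J → ι) {d : J → ℕ}
    (hd : ∀ j, d j ≤ n) (e : Rows n d ≃ Fin n × Fin N)
    (hind : ∀ z ∈ rowSupport (GenField ι J n N) i d (fun _ => Finset.univ),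
      comb i (genRow J N le_rfl) (genVec (N := N) ι n) z = 0 → z = 0) :
    ∃ (g : ι → Matrix (Fin n) (Fin n) ℂ) (v : J → Fin N → ℂ), (∀ i₀, (g i₀).det = 1) ∧
      rowDet i d e g v ≠ 0 := by
  classical
  let P := MvPolynomial (Vars ι J n N) ℂ
  let G : ι → Matrix (Fin n) (Fin n) P := fun i₀ => Matrix.of fun r q =>
    MvPolynomial.X (Sum.inl (i₀, r, q))
  let W : J → Fin N → P := fun j p => MvPolynomial.X (Sum.inr (j, p))
  have hD : rowDet i d e G W ≠ 0 := by
    intro h0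
    let f : P →+* GenField ι J n N := algebraMap _ _
    have h1 : rowDet i d e (fun i₀ => (G i₀).map f) (fun j p => f (W j p)) = 0 := by
      rw [rowDet_map, h0, map_zero]
    obtain ⟨z, hz0, hz⟩ := Matrix.exists_vecMul_eq_zero_iff.2 h1
    apply hz0
    let z' : J → Fin n → GenField ι J n N := fun j r =>
      if h : (r : ℕ) < d j then z ⟨j, r, h⟩ else 0
    have hz' : z' = 0 := by
      refine hind z' ?_ ?_
      · intro j r h
        refine ⟨Finset.mem_univ _, ?_⟩
        by_contra h'
        exact h (by simp only [z', dif_neg h'])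
      · ext q p
        rw [comb_apply]
        have h2 := congrFun hz (e.symm (q, p))
        rw [Pi.zero_apply] at h2
        rw [Matrix.zero_apply, ← h2, Matrix.vecMul, dotProduct, Fintype.sum_sigma]
        refine Finset.sum_congr rfl fun j _ => ?_
        rw [← Fintype.sum_subtype_add_sum_subtype (fun k : Fin n => (k : ℕ) < d j)]
        rw [add_eq_left.2]
        · refine Finset.sum_congr rfl fun r _ => ?_
          simp only [z', dif_pos r.2]
          simp [rowMat, G, W, f, genRow, genVec]
          exact Or.inl rfl
        · refine Finset.sum_eq_zero fun r _ => ?_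
          simp only [z', dif_neg r.2, zero_mul]
    funext w
    have := congrFun (congrFun hz' w.1) w.2
    simpa [z', w.2.2] using this
  have hG : ∀ i₀, (G i₀).det ≠ 0 := by
    intro i₀ h0
    have := congrArg (MvPolynomial.eval (Sum.elim (fun w : ι × Fin n × Fin n =>
      (1 : Matrix (Fin n) (Fin n) ℂ) w.2.1 w.2.2) fun _ => 0)) h0
    rw [RingHom.map_det, map_zero] at this
    have e : (MvPolynomial.eval (Sum.elim (fun w : ι × Fin n × Fin n =>
      (1 : Matrix (Fin n) (Fin n) ℂ) w.2.1 w.2.2) fun _ => 0)).mapMatrix (G i₀) = 1 := by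
      ext r q; simp [G]
    rw [e, det_one] at this
    exact one_ne_zero this
  have hprod : rowDet i d e G W * ∏ i₀, (G i₀).det ≠ 0 :=
    mul_ne_zero hD (Finset.prod_ne_zero_iff.2 fun i₀ _ => hG i₀)
  obtain ⟨pt, hpt⟩ : ∃ pt, MvPolynomial.eval pt (rowDet i d e G W * ∏ i₀, (G i₀).det) ≠ 0 := by
    by_contra! h
    exact hprod (MvPolynomial.funext fun pt => by rw [h pt, map_zero])
  rw [map_mul, map_prod] at hpt
  have hg : ∀ i₀, ((G i₀).map (MvPolynomial.eval pt)).det ≠ 0 := by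
    intro i₀
    have := Finset.prod_ne_zero_iff.1 (right_ne_zero_of_mul hpt) i₀ (Finset.mem_univ _)
    rwa [RingHom.map_det] at this
  choose a g ha hg1 hga using fun i₀ => exists_smul_det_eq_one (hg i₀)
  refine ⟨g, fun j p => MvPolynomial.eval pt (W j p), hg1, ?_⟩
  have h1 := left_ne_zero_of_mul hpt
  rw [← rowDet_map, funext hga, rowDet_smul i hd] at h1
  exact right_ne_zero_of_mul h1

end Determinant

/-- The combinatorial core: a nonzero invariant in degree `m` gives a nonzero determinant. -/
theorem exists_rowDet_ne_zero_of_leadSum {n m N : ℕ} {ι J Λ : Type*} [Fintype J] [Fintype Λ]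
    [DecidableEq J]
    {i : J → ι} {d : J → ℕ} {c : Λ → ℂ} {X : Λ → ι → Matrix (Fin n) (Fin n) ℂ}
    [NeZero n] [Fintype ι] (hm : 0 < m) (hd : ∀ j, d j ≤ n)
    (hN : ∑ j, d j = n * N)
    (hSL : ∀ (g : ι → Matrix (Fin n) (Fin n) ℂ) (h : Matrix (Fin n) (Fin n) ℂ),
      (∀ i₀, (g i₀).det = 1) → h.det = 1 →
      leadSum m i d c X (fun i₀ => g i₀ * h) = leadSum m i d c X g)
    {g₀ : ι → Matrix (Fin n) (Fin n) ℂ} (hg₀ : leadSum m i d c X g₀ ≠ 0)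
    (e : Rows n d ≃ Fin n × Fin N) :
    ∃ (g : ι → Matrix (Fin n) (Fin n) ℂ) (v : J → Fin N → ℂ), (∀ i₀, (g i₀).det = 1) ∧
      rowDet i d e g v ≠ 0 := by
  refine exists_rowDet_ne_zero i hd e ?_
  refine generic_indep hm hd hN hSL n le_rfl _ (fun _ => by simp) ?_
  exact Good.of_point g₀ (fun i₀ r _ q hq => absurd q.2 (not_lt.2 hq)) hg₀

end Saturation

namespace Saturation

open Matrix

section CauchyBinet

theorem det_mul_eq_sum {κ ν A : Type*} [Fintype κ] [DecidableEq κ] [Fintype ν]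
    [CommRing A] (M : Matrix κ ν A) (B : Matrix ν κ A) :
    (M * B).det = ∑ I : κ → ν, (∏ k, B (I k) k) * (M.submatrix id I).det := by
  classical
  rw [← Matrix.det_transpose]
  have h1 : (M * B)ᵀ = fun k => ∑ l, B l k • Mᵀ l := by
    funext k q
    simp [Matrix.mul_apply, mul_comm]
  have h2 : (M * B)ᵀ.det = Matrix.detRowAlternating.toMultilinearMap (M * B)ᵀ := rfl
  rw [h2, h1, MultilinearMap.map_sum]
  refine Finset.sum_congr rfl fun I _ => ?_
  rw [MultilinearMap.map_smul_univ, ← Matrix.det_transpose (M.submatrix id I)]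
  rfl

/-- A symmetric form of the Cauchy-Binet formula. -/
theorem factorial_mul_det_mul {κ ν A : Type*} [Fintype κ] [DecidableEq κ] [Fintype ν]
    [CommRing A] (M : Matrix κ ν A) (B : Matrix ν κ A) :
    (Fintype.card (Equiv.Perm κ) : A) * (M * B).det =
      ∑ I : κ → ν, (M.submatrix id I).det * (B.submatrix I id).det := by
  have h1 : ∀ σ : Equiv.Perm κ, (M * B).det =
      ∑ I : κ → ν, (M.submatrix id I).det *
        (((Equiv.Perm.sign σ : ℤ) : A) * ∏ k, B (I (σ k)) k) := by
    intro σ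
    rw [det_mul_eq_sum, ← Equiv.sum_comp (σ.arrowCongr (Equiv.refl ν)).symm]
    refine Finset.sum_congr rfl fun I _ => ?_
    have h : M.submatrix id ((σ.arrowCongr (Equiv.refl ν)).symm I) =
        (M.submatrix id I).submatrix id σ := rfl
    rw [h, Matrix.det_permute']
    have h' : ∀ k, (σ.arrowCongr (Equiv.refl ν)).symm I k = I (σ k) := fun _ => rfl
    simp only [h']
    ring
  calc (Fintype.card (Equiv.Perm κ) : A) * (M * B).det
      = ∑ σ : Equiv.Perm κ, (M * B).det := by simp [Fintype.card_perm]
    _ = ∑ σ : Equiv.Perm κ, ∑ I : κ → ν, (M.submatrix id I).det *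
        (((Equiv.Perm.sign σ : ℤ) : A) * ∏ k, B (I (σ k)) k) :=
        Finset.sum_congr rfl fun σ _ => h1 σ
    _ = _ := by
        rw [Finset.sum_comm]
        refine Finset.sum_congr rfl fun I _ => ?_
        rw [← Finset.mul_sum, Matrix.det_apply' (B.submatrix I id)]
        rfl

theorem sign_sigmaCongrRight {J : Type*} [Fintype J] [DecidableEq J] {κ : J → Type*}
    [∀ j, Fintype (κ j)] [∀ j, DecidableEq (κ j)] (τ : ∀ j, Equiv.Perm (κ j)) :
    Equiv.Perm.sign (Equiv.Perm.sigmaCongrRight τ) = ∏ j, Equiv.Perm.sign (τ j) := by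
  let F : (∀ j, Equiv.Perm (κ j)) →* ℤˣ :=
    Equiv.Perm.sign.comp (Equiv.Perm.sigmaCongrRightHom κ)
  let G : (∀ j, Equiv.Perm (κ j)) →* ℤˣ :=
    { toFun := fun τ => ∏ j, Equiv.Perm.sign (τ j)
      map_one' := by simp
      map_mul' := fun τ τ' => by simp [Finset.prod_mul_distrib] }
  suffices h : F = G from congrArg (fun H : (∀ j, Equiv.Perm (κ j)) →* ℤˣ => H τ) h
  refine MonoidHom.pi_ext fun j ρ => ?_
  have hG : G (Pi.mulSingle j ρ) = Equiv.Perm.sign ρ := by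
    change ∏ j', Equiv.Perm.sign ((Pi.mulSingle j ρ : ∀ j, Equiv.Perm (κ j)) j') = _
    rw [Finset.prod_eq_single j]
    · simp
    · intro j' _ hj'
      simp [Pi.mulSingle_eq_of_ne hj']
    · simp
  rw [hG]
  clear hG
  induction ρ using Equiv.Perm.swap_induction_on with
  | one => rw [Pi.mulSingle_one, map_one, map_one]
  | swap_mul ρ a b hab ih =>
    rw [Pi.mulSingle_mul, map_mul, map_mul, ih, Equiv.Perm.sign_swap hab]
    · congr 1
      have h1 : Equiv.Perm.sigmaCongrRightHom κ (Pi.mulSingle j (Equiv.swap a b)) =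
          Equiv.swap ⟨j, a⟩ ⟨j, b⟩ := by
        ext1 ⟨j', r⟩
        change (⟨j', (Pi.mulSingle j (Equiv.swap a b) : ∀ j, Equiv.Perm (κ j)) j' r⟩ :
          Σ j, κ j) = _
        by_cases hj : j' = j
        · subst hj
          rw [Pi.mulSingle_eq_same]
          simp only [Equiv.swap_apply_def]
          split_ifs <;> simp_all
        · rw [Pi.mulSingle_eq_of_ne hj, Equiv.swap_apply_of_ne_of_ne]
          · rfl
          · intro h; exact hj (congrArg Sigma.fst h)
          · intro h; exact hj (congrArg Sigma.fst h)
      change Equiv.Perm.sign (Equiv.Perm.sigmaCongrRightHom κ (Pi.mulSingle j (Equiv.swap a b))) = _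
      rw [h1, Equiv.Perm.sign_swap]
      intro h
      exact hab (by simpa using h)

end CauchyBinet

section Minors

variable {n N : ℕ} {ι J : Type*} [Fintype J] [DecidableEq J]

/-- The choices of columns. -/
abbrev ColIdx (n : ℕ) (d : J → ℕ) := ∀ j : J, {r : Fin n // (r : ℕ) < d j} → Fin n

/-- The products of minors supported on the top rows. -/
def minors (i : J → ι) (d : J → ℕ) {A : Type*} [CommRing A] (g : ι → Matrix (Fin n) (Fin n) A)
    (I : ColIdx n d) : A :=
  ∏ j, ((g (i j)).submatrix (Subtype.val : {r : Fin n // (r : ℕ) < d j} → Fin n) (I j)).det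

/-- The normalizing constant. -/
def permCount (n : ℕ) (d : J → ℕ) : ℕ :=
  ∏ j : J, Fintype.card (Equiv.Perm {r : Fin n // (r : ℕ) < d j})

omit [DecidableEq J] in
theorem permCount_ne_zero (d : J → ℕ) : permCount n d ≠ 0 :=
  Finset.prod_ne_zero_iff.2 fun _ _ => Fintype.card_ne_zero

theorem permCount_mul_prod_lead (i : J → ι) (d : J → ℕ) {A : Type*} [CommRing A]
    (g x : ι → Matrix (Fin n) (Fin n) A) :
    (permCount n d : A) * ∏ j, lead (d j) (g (i j) * x (i j)) =
      ∑ I : ColIdx n d, minors i d g I * minors i d (fun i₀ => (x i₀)ᵀ) I := by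
  rw [permCount, Nat.cast_prod, ← Finset.prod_mul_distrib]
  have h1 : ∀ j, (Fintype.card (Equiv.Perm {r : Fin n // (r : ℕ) < d j}) : A) *
      lead (d j) (g (i j) * x (i j)) =
      ∑ I : {r : Fin n // (r : ℕ) < d j} → Fin n,
        ((g (i j)).submatrix (Subtype.val : {r : Fin n // (r : ℕ) < d j} → Fin n) I).det *
        ((x (i j))ᵀ.submatrix (Subtype.val : {r : Fin n // (r : ℕ) < d j} → Fin n) I).det := by
    intro j
    have h2 : (g (i j) * x (i j)).submatrix
        (Subtype.val : {r : Fin n // (r : ℕ) < d j} → Fin n) Subtype.val =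
        (g (i j)).submatrix (Subtype.val : {r : Fin n // (r : ℕ) < d j} → Fin n) id *
        (x (i j)).submatrix id (Subtype.val : {r : Fin n // (r : ℕ) < d j} → Fin n) := rfl
    rw [lead, h2, factorial_mul_det_mul]
    refine Finset.sum_congr rfl fun I _ => ?_
    congr 1
    rw [← Matrix.det_transpose]
    rfl
  simp only [h1, Finset.prod_univ_sum, Fintype.piFinset_univ, Finset.prod_mul_distrib, minors]

theorem permCount_mul_rowDet (i : J → ι) (d : J → ℕ) (e : Rows n d ≃ Fin n × Fin N) {A : Type*}
    [CommRing A] (g : ι → Matrix (Fin n) (Fin n) A) (v : J → Fin N → A) :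
    (permCount n d : A) * rowDet i d e g v =
      ∑ π : Equiv.Perm (Rows n d), (((Equiv.Perm.sign π : ℤ) : A) * ∏ w, v w.1 (e (π w)).2) *
        minors i d g fun j r => (e (π ⟨j, r⟩)).1 := by
  have h1 : ∀ τ : (∀ j, Equiv.Perm {r : Fin n // (r : ℕ) < d j}), rowDet i d e g v =
      ∑ π : Equiv.Perm (Rows n d), (((Equiv.Perm.sign π : ℤ) : A) * ∏ w, v w.1 (e (π w)).2) *
        ∏ j, (((Equiv.Perm.sign (τ j) : ℤ) : A) *
          ∏ r : {r : Fin n // (r : ℕ) < d j}, g (i j) r (e (π ⟨j, τ j r⟩)).1) := by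
    intro τ
    rw [rowDet, ← Matrix.det_transpose, Matrix.det_apply',
      ← Equiv.sum_comp (Equiv.mulRight (Equiv.Perm.sigmaCongrRight τ))]
    refine Finset.sum_congr rfl fun π _ => ?_
    simp only [Equiv.coe_mulRight, Equiv.Perm.sign_mul, sign_sigmaCongrRight,
      Equiv.Perm.mul_apply, Matrix.transpose_apply, Matrix.submatrix_apply, rowMat, Matrix.of_apply,
      Finset.prod_mul_distrib, id]
    have h2 : ∏ w : Rows n d, v w.1 (e (π (Equiv.Perm.sigmaCongrRight τ w))).2 =
        ∏ w, v w.1 (e (π w)).2 :=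
      Equiv.prod_comp (Equiv.Perm.sigmaCongrRight τ) fun w => v w.1 (e (π w)).2
    rw [h2, Fintype.prod_sigma]
    have h3 : ∀ j (r : {r : Fin n // (r : ℕ) < d j}), Equiv.Perm.sigmaCongrRight τ ⟨j, r⟩ =
      ⟨j, τ j r⟩ := fun _ _ => rfl
    simp only [h3]
    push_cast
    ring
  calc (permCount n d : A) * rowDet i d e g v
      = ∑ τ : (∀ j, Equiv.Perm {r : Fin n // (r : ℕ) < d j}), rowDet i d e g v := by
        simp [permCount, Fintype.card_pi]
    _ = ∑ τ : (∀ j, Equiv.Perm {r : Fin n // (r : ℕ) < d j}), _ :=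
        Finset.sum_congr rfl fun τ _ => h1 τ
    _ = _ := by
        rw [Finset.sum_comm]
        refine Finset.sum_congr rfl fun π _ => ?_
        rw [← Finset.mul_sum]
        congr 1
        rw [minors]
        have h4 : ∀ j, ((g (i j)).submatrix (Subtype.val : {r : Fin n // (r : ℕ) < d j} → Fin n)
            fun r => (e (π ⟨j, r⟩)).1).det = ∑ τ : Equiv.Perm {r : Fin n // (r : ℕ) < d j},
              ((Equiv.Perm.sign τ : ℤ) : A) *
                ∏ r : {r : Fin n // (r : ℕ) < d j}, g (i j) r (e (π ⟨j, τ r⟩)).1 := by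
          intro j
          rw [← Matrix.det_transpose, Matrix.det_apply']
          rfl
        simp only [h4, Finset.prod_univ_sum, Fintype.piFinset_univ]

/-- A linear functional on a space of complex vectors stable under conjugation is represented by
a vector of that space. -/
theorem exists_mem_represents {T : Type*} [Fintype T] (R : Submodule ℂ (T → ℂ))
    (hR : ∀ z ∈ R, star z ∈ R) (a : T → ℂ) :
    ∃ y ∈ R, ∀ z ∈ R, ∑ t, a t * z t = ∑ t, y t * z t := by
  let L := WithLp.linearEquiv 2 ℂ (T → ℂ)
  let R' : Submodule ℂ (EuclideanSpace ℂ T) := R.comap L.toLinearMap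
  let a' : EuclideanSpace ℂ T := WithLp.toLp 2 (star a)
  let y' : R' := R'.orthogonalProjectionOnto a'
  refine ⟨star (L y'), hR _ y'.2, fun z hz => ?_⟩
  have h1 : inner ℂ (a' - y') (WithLp.toLp 2 z) = 0 :=
    Submodule.inner_left_of_mem_orthogonal (K := R') (by exact hz)
      (Submodule.sub_starProjection_mem_orthogonal (K := R') a')
  rw [inner_sub_left, sub_eq_zero] at h1
  simp only [PiLp.inner_apply, RCLike.inner_apply] at h1
  simpa [a', L, mul_comm] using h1

theorem rowDet_eq_leadSum (i : J → ι) (d : J → ℕ) (e : Rows n d ≃ Fin n × Fin N)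
    (v : J → Fin N → ℂ) :
    ∃ (L : ℕ) (c : Fin L → ℂ) (X : Fin L → ι → Matrix (Fin n) (Fin n) ℂ),
      (∀ l i₀, (X l i₀).det = 1) ∧
      ∀ g : ι → Matrix (Fin n) (Fin n) ℂ, (∀ i₀, (g i₀).det = 1) →
        rowDet i d e g v = ∑ l, c l * ∏ j, lead (d j) (g (i j) * X l (i j)) := by
  classical
  let U : Set (ColIdx n d → ℂ) :=
    {z | ∃ x : ι → Matrix (Fin n) (Fin n) ℂ, (∀ i₀, (x i₀).det = 1) ∧ z = minors i d x}
  let R := Submodule.span ℂ U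
  have hR : ∀ z ∈ R, star z ∈ R := by
    intro z hz
    induction hz using Submodule.span_induction with
    | mem z hz =>
      obtain ⟨x, hx, rfl⟩ := hz
      refine Submodule.subset_span ⟨fun i₀ => (x i₀).map (starRingEnd ℂ), fun i₀ => ?_, ?_⟩
      · have := RingHom.map_det (starRingEnd ℂ) (x i₀)
        rw [hx, map_one] at this
        exact this.symm
      · funext I
        rw [Pi.star_apply, minors, minors, ← starRingEnd_apply, map_prod]
        refine Finset.prod_congr rfl fun j _ => ?_
        rw [RingHom.map_det]
        rfl
    | zero => simp
    | add z w _ _ hz hw => rw [star_add]; exact add_mem hz hw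
    | smul a z _ hz => rw [star_smul]; exact R.smul_mem _ hz
  have hC : (permCount n d : ℂ) ≠ 0 := Nat.cast_ne_zero.2 (permCount_ne_zero d)
  let a : ColIdx n d → ℂ := fun I => ∑ π : Equiv.Perm (Rows n d),
    if (fun j r => (e (π ⟨j, r⟩)).1) = I then
      ((Equiv.Perm.sign π : ℤ) : ℂ) * ∏ w, v w.1 (e (π w)).2 else 0
  have ha : ∀ g : ι → Matrix (Fin n) (Fin n) ℂ, (permCount n d : ℂ) * rowDet i d e g v =
      ∑ I, a I * minors i d g I := by
    intro g
    rw [permCount_mul_rowDet]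
    simp only [a, Finset.sum_mul]
    rw [Finset.sum_comm]
    refine Finset.sum_congr rfl fun π _ => ?_
    simp
  obtain ⟨y, hy, hya⟩ := exists_mem_represents R hR a
  obtain ⟨L, c, u, hu⟩ := (Submodule.mem_span_set'.1 hy)
  choose x hx hux using fun l => (u l).2
  refine ⟨L, c, fun l i₀ => (x l i₀)ᵀ, fun l i₀ => by rw [Matrix.det_transpose, hx], ?_⟩
  intro g hg
  apply mul_left_cancel₀ hC
  rw [ha, hya _ (Submodule.subset_span ⟨g, hg, rfl⟩), Finset.mul_sum]
  have h2 : ∀ l, (permCount n d : ℂ) *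
      (c l * ∏ j, lead (d j) (g (i j) * (x l (i j))ᵀ)) =
      ∑ I, c l * (minors i d g I * minors i d (x l) I) := by
    intro l
    rw [mul_left_comm, permCount_mul_prod_lead i d g (fun i₀ => (x l i₀)ᵀ), Finset.mul_sum]
    simp
  simp only [h2]
  rw [Finset.sum_comm]
  refine Finset.sum_congr rfl fun I _ => ?_
  rw [← hu, Finset.sum_apply, Finset.sum_mul]
  refine Finset.sum_congr rfl fun l _ => ?_
  rw [Pi.smul_apply, smul_eq_mul, hux]
  ring

end Minors

section VectorGroup

variable {X M : Type*} [AddCommGroup X] [Module ℂ X] [FiniteDimensional ℂ X]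
  [AddCommGroup M] [Module ℂ M]

/-- The eigenvalues are roots of unity of bounded order. -/
theorem eigenvalue_pow_factorial_eq_one {q : ℕ} (hq : 2 ≤ q) {F S : Module.End ℂ X}
    (hS : Function.Injective S) (hF : Function.Injective F)
    (hFS : ∀ x, F (S x) = S ((F ^ q) x)) {μ : ℂ} {y : X} (hy : y ≠ 0) (hμ : F y = μ • y) :
    μ ^ (q ^ Module.finrank ℂ X).factorial = 1 := by
  have hpow : ∀ (ν : ℂ) (x : X), F x = ν • x → ∀ k : ℕ, (F ^ k) x = ν ^ k • x := by
    intro ν x h k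
    induction k with
    | zero => simp
    | succ k ih => rw [pow_succ', Module.End.mul_apply, ih, map_smul, h, smul_smul, pow_succ]
  have hμ0 : μ ≠ 0 := by
    rintro rfl
    rw [zero_smul] at hμ
    exact hy (hF (hμ.trans (map_zero F).symm))
  have hk : ∀ k : ℕ, F ((S ^ k) y) = μ ^ q ^ k • (S ^ k) y := by
    intro k
    induction k with
    | zero => simpa using hμ
    | succ k ih =>
      rw [pow_succ' S, Module.End.mul_apply, hFS, hpow _ _ ih, map_smul, ← pow_mul, ← pow_succ]
  have hSk : ∀ k : ℕ, (S ^ k) y ≠ 0 := by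
    intro k
    induction k with
    | zero => simpa using hy
    | succ k ih =>
      rw [pow_succ' S, Module.End.mul_apply]
      exact fun h => ih (hS (h.trans (map_zero S).symm))
  have hninj : ¬ Function.Injective fun k : Fin (Module.finrank ℂ X + 1) => μ ^ q ^ (k : ℕ) := by
    intro hinj
    have := Module.End.eigenvectors_linearIndependent' F _ hinj (fun k => (S ^ (k : ℕ)) y)
      fun k => ⟨Module.End.mem_eigenspace_iff.2 (hk k), hSk k⟩
    have := this.fintype_card_le_finrank
    simp at this
  have : ∃ a b : ℕ, a < b ∧ b ≤ Module.finrank ℂ X ∧ μ ^ q ^ a = μ ^ q ^ b := by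
    simp only [Function.Injective, not_forall] at hninj
    obtain ⟨a, b, h, hab⟩ := hninj
    rcases lt_or_gt_of_ne hab with h' | h'
    · exact ⟨a, b, h', by omega, h⟩
    · exact ⟨b, a, h', by omega, h.symm⟩
  obtain ⟨a, b, hab, hb, h⟩ := this
  have hlt : q ^ a < q ^ b := Nat.pow_lt_pow_right hq hab
  have h1 : μ ^ (q ^ b - q ^ a) = 1 := by
    have h2 : μ ^ q ^ b = μ ^ (q ^ b - q ^ a) * μ ^ q ^ a := by
      rw [← pow_add, Nat.sub_add_cancel hlt.le]
    rw [← h] at h2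
    exact (mul_eq_right₀ (pow_ne_zero _ hμ0)).1 h2.symm
  have hdvd : (q ^ b - q ^ a) ∣ (q ^ Module.finrank ℂ X).factorial := by
    refine Nat.dvd_factorial (by omega) ((Nat.sub_le _ _).trans ?_)
    exact Nat.pow_le_pow_right (by omega) hb
  obtain ⟨c, hc⟩ := hdvd
  rw [hc, pow_mul, h1, one_pow]

/-- A vector group normalized by a scaling has a common fixed vector. -/
theorem exists_fixed_of_scaling {q : ℕ} (hq : 2 ≤ q) (E : M → Module.End ℂ X) (h0 : E 0 = 1)
    (hadd : ∀ a b, E (a + b) = E a * E b) {S : Module.End ℂ X} (hS : Function.Injective S)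
    (hES : ∀ a x, E a (S x) = S (E (q • a) x)) {Y₀ : Submodule ℂ X} (hY₀ : Y₀ ≠ ⊥)
    (hEY : ∀ a, ∀ y ∈ Y₀, E a y ∈ Y₀) (hSY : ∀ y ∈ Y₀, S y ∈ Y₀) :
    ∃ y ∈ Y₀, y ≠ 0 ∧ ∀ a, E a y = y := by
  have hpow : ∀ (k : ℕ) a, E (k • a) = E a ^ k := by
    intro k a
    induction k with
    | zero => simp [h0]
    | succ k ih => rw [succ_nsmul, hadd, ih, pow_succ]
  have hinj : ∀ a, Function.Injective (E a) := by
    intro a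
    have h : E (-a) * E a = 1 := by rw [← hadd, neg_add_cancel, h0]
    exact Function.LeftInverse.injective (g := E (-a)) fun x => congrArg (fun f => f x) h
  let 𝒴 : Set (Submodule ℂ X) :=
    {Y | Y ≠ ⊥ ∧ Y ≤ Y₀ ∧ (∀ a, ∀ y ∈ Y, E a y ∈ Y) ∧ ∀ y ∈ Y, S y ∈ Y}
  obtain ⟨Y, ⟨hYb, hYle, hYE, hYS⟩, hmin⟩ :=
    wellFounded_lt.has_min 𝒴 ⟨Y₀, hY₀, le_rfl, hEY, hSY⟩
  have key : ∀ a, ∀ y ∈ Y, E a y = y := by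
    intro a
    let Z : Submodule ℂ X := Y ⊓ LinearMap.ker (E a - 1)
    have hZ : ∀ z, z ∈ Z ↔ z ∈ Y ∧ E a z = z := by
      intro z
      simp [Z, sub_eq_zero]
    suffices h : Z = Y from fun y hy => ((hZ y).1 (h ▸ hy)).2
    by_contra hne
    refine hmin Z ⟨?_, inf_le_left.trans hYle, ?_, ?_⟩ (lt_of_le_of_ne inf_le_left hne)
    · set m := (q ^ Module.finrank ℂ X).factorial with hm
      have hm0 : (m : ℂ) ≠ 0 := Nat.cast_ne_zero.2 (Nat.factorial_ne_zero _)
      let b : M := (m : ℂ)⁻¹ • a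
      have hb : m • b = a := by
        rw [← Nat.cast_smul_eq_nsmul ℂ, smul_smul, mul_inv_cancel₀ hm0, one_smul]
      have : Nontrivial Y := Submodule.nontrivial_iff_ne_bot.2 hYb
      obtain ⟨μ, hμ⟩ := Module.End.exists_eigenvalue ((E b).restrict (hYE b))
      obtain ⟨y, hy⟩ := hμ.exists_hasEigenvector
      have hy1 : E b (y : X) = μ • (y : X) := congrArg Subtype.val hy.apply_eq_smul
      have hy0 : (y : X) ≠ 0 := fun h => hy.2 (Subtype.ext h)
      have hμ1 : μ ^ m = 1 := eigenvalue_pow_factorial_eq_one hq hS (hinj b)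
        (fun x => by rw [hES, hpow]) hy0 hy1
      have hk : ∀ k : ℕ, (E b ^ k) (y : X) = μ ^ k • (y : X) := by
        intro k
        induction k with
        | zero => simp
        | succ k ih =>
          rw [pow_succ', Module.End.mul_apply, ih, map_smul, hy1, smul_smul, pow_succ]
      refine fun hbot => hy0 ?_
      have : (y : X) ∈ Z := (hZ _).2 ⟨y.2, by rw [← hb, hpow, hk, hμ1, one_smul]⟩
      rwa [hbot, Submodule.mem_bot] at this
    · intro b z hz
      obtain ⟨h1, h2⟩ := (hZ z).1 hz
      refine (hZ _).2 ⟨hYE b z h1, ?_⟩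
      rw [← Module.End.mul_apply, ← hadd, add_comm, hadd, Module.End.mul_apply, h2]
    · intro z hz
      obtain ⟨h1, h2⟩ := (hZ z).1 hz
      refine (hZ _).2 ⟨hYS z h1, ?_⟩
      have hk : ∀ k : ℕ, (E a ^ k) z = z := by
        intro k
        induction k with
        | zero => simp
        | succ k ih => rw [pow_succ', Module.End.mul_apply, ih, h2]
      rw [hES, hpow, hk]
  obtain ⟨y, hy, hy0⟩ := Submodule.exists_mem_ne_zero_of_ne_bot hYb
  exact ⟨y, hYle hy, hy0, fun a => key a y hy⟩

end VectorGroup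

section LowerUnipotent

variable {n : ℕ}

/-- Lower unitriangular matrices in `SL n` whose first `k` rows are those of the identity. -/
def IsUniLower (k : ℕ) (g : SL n) : Prop :=
  (∀ r j : Fin n, r < j → g.val r j = 0) ∧ (∀ r, g.val r r = 1) ∧
    ∀ r : Fin n, (r : ℕ) < k → Pi.single r 1 ᵥ* g.val = Pi.single r 1

theorem IsUniLower.vecMul {k : ℕ} {g : SL n} (hg : IsUniLower k g) {y : Fin n → ℂ}
    (hy : ∀ r : Fin n, y r ≠ 0 → (r : ℕ) < k) : y ᵥ* g.val = y := by
  have h1 : ∀ r : Fin n, y r • (Pi.single r 1 ᵥ* g.val) = y r • (Pi.single r 1 : Fin n → ℂ) := by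
    intro r
    by_cases h : y r = 0
    · simp [h]
    · rw [hg.2.2 r (hy r h)]
  have h2 : y = ∑ r, y r • (Pi.single r 1 : Fin n → ℂ) := by
    funext j
    simp [Finset.sum_apply, Pi.single_apply]
  conv_lhs => rw [h2]
  conv_rhs => rw [h2]
  rw [← Matrix.vecMulLinear_apply, map_sum]
  exact Finset.sum_congr rfl fun r _ => by rw [map_smul, Matrix.vecMulLinear_apply, h1]

theorem mul_lower {g h : Matrix (Fin n) (Fin n) ℂ} (hg : ∀ r j : Fin n, r < j → g r j = 0)
    (hh : ∀ r j : Fin n, r < j → h r j = 0) :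
    (∀ r j : Fin n, r < j → (g * h) r j = 0) ∧ ∀ r, (g * h) r r = g r r * h r r := by
  constructor
  · intro r j hrj
    rw [Matrix.mul_apply]
    refine Finset.sum_eq_zero fun l _ => ?_
    rcases lt_or_ge r l with h1 | h1
    · rw [hg r l h1, zero_mul]
    · rw [hh l j (h1.trans_lt hrj), mul_zero]
  · intro r
    rw [Matrix.mul_apply, Finset.sum_eq_single r]
    · intro l _ hl
      rcases lt_or_gt_of_ne hl with h1 | h1
      · rw [hh l r h1, mul_zero]
      · rw [hg r l h1, zero_mul]
    · simp

/-- The matrix with a single nonzero row, strictly left of the diagonal. -/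
def rowMatrix (k : Fin n) (c : Fin n → ℂ) : Matrix (Fin n) (Fin n) ℂ :=
  Matrix.of fun r j => if r = k ∧ j < k then c j else 0

theorem rowMatrix_mul (k : Fin n) (c c' : Fin n → ℂ) : rowMatrix k c * rowMatrix k c' = 0 := by
  ext r j
  rw [Matrix.mul_apply]
  refine Finset.sum_eq_zero fun l _ => ?_
  simp only [rowMatrix, Matrix.of_apply]
  by_cases h : l = k
  · simp [h]
  · simp [h]

theorem rowMatrix_add (k : Fin n) (c c' : Fin n → ℂ) :
    rowMatrix k (c + c') = rowMatrix k c + rowMatrix k c' := by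
  ext r j
  simp only [rowMatrix, Matrix.of_apply, Matrix.add_apply, Pi.add_apply]
  split_ifs <;> simp

/-- The elementary row operation `1 + rowMatrix k c`. -/
def rowElem (k : Fin n) (c : Fin n → ℂ) : SL n :=
  ⟨1 + rowMatrix k c, by
    rw [Matrix.det_of_isLowerTriangular]
    · refine Finset.prod_eq_one fun r _ => ?_
      have h2 : ¬ (r = k ∧ r < k) := by rintro ⟨rfl, h⟩; exact lt_irrefl _ h
      simp [rowMatrix, h2]
    · intro r j hrj
      have : r < j := hrj
      have h2 : ¬ (r = k ∧ j < k) := by rintro ⟨rfl, h⟩; exact lt_asymm this h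
      simp [rowMatrix, h2, this.ne]⟩

theorem rowElem_val (k : Fin n) (c : Fin n → ℂ) : (rowElem k c).val = 1 + rowMatrix k c := rfl

theorem rowElem_add (k : Fin n) (c c' : Fin n → ℂ) :
    rowElem k (c + c') = rowElem k c * rowElem k c' := by
  apply Subtype.ext
  rw [Matrix.SpecialLinearGroup.coe_mul, rowElem_val, rowElem_val, rowElem_val, add_mul, mul_add,
    mul_add, rowMatrix_mul, rowMatrix_add, mul_one, one_mul, mul_one]
  abel

theorem rowElem_zero (k : Fin n) : rowElem k 0 = 1 := by
  have := rowElem_add k 0 0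
  rw [add_zero] at this
  exact (mul_eq_left.1 this.symm)

theorem rowElem_neg_mul (k : Fin n) (c : Fin n → ℂ) : rowElem k (-c) * rowElem k c = 1 := by
  rw [← rowElem_add, neg_add_cancel, rowElem_zero]

theorem rowElem_mul_neg (k : Fin n) (c : Fin n → ℂ) : rowElem k c * rowElem k (-c) = 1 := by
  rw [← rowElem_add, add_neg_cancel, rowElem_zero]

theorem single_vecMul_rowElem (k r : Fin n) (c : Fin n → ℂ) :
    Pi.single r 1 ᵥ* (rowElem k c).val =
      Pi.single r 1 + fun j => if r = k ∧ j < k then c j else 0 := by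
  rw [rowElem_val, Matrix.vecMul_add, Matrix.vecMul_one, Matrix.single_one_vecMul]
  rfl

theorem isUniLower_rowElem (k : Fin n) (c : Fin n → ℂ) : IsUniLower k (rowElem k c) := by
  refine ⟨fun r j hrj => ?_, fun r => ?_, fun r hr => ?_⟩
  · have h2 : ¬ (r = k ∧ j < k) := by rintro ⟨rfl, h⟩; exact lt_asymm hrj h
    simp [rowElem_val, rowMatrix, h2, hrj.ne]
  · have h2 : ¬ (r = k ∧ r < k) := by rintro ⟨rfl, h⟩; exact lt_irrefl _ h
    simp [rowElem_val, rowMatrix, h2]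
  · rw [single_vecMul_rowElem]
    have : r ≠ k := by rintro rfl; exact lt_irrefl _ hr
    funext j
    simp [this]

theorem IsUniLower.conj_rowElem {k : Fin n} {g : SL n} (hg : IsUniLower (k + 1) g)
    (c : Fin n → ℂ) : IsUniLower (k + 1) (rowElem k (-c) * g * rowElem k c) := by
  have h1 := isUniLower_rowElem k c
  have h2 := isUniLower_rowElem k (-c)
  have h3 := mul_lower h2.1 hg.1
  have h4 := mul_lower h3.1 h1.1
  refine ⟨?_, fun r => ?_, fun r hr => ?_⟩
  · exact h4.1
  · refine (h4.2 r).trans ?_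
    rw [h3.2, h1.2.1, h2.2.1, hg.2.1]; simp
  · rw [Matrix.SpecialLinearGroup.coe_mul, Matrix.SpecialLinearGroup.coe_mul,
      ← Matrix.vecMul_vecMul, ← Matrix.vecMul_vecMul, hg.vecMul, Matrix.vecMul_vecMul,
      ← Matrix.SpecialLinearGroup.coe_mul, rowElem_neg_mul]
    · simp
    · intro j hj
      rw [single_vecMul_rowElem] at hj
      by_contra hjk
      have h5 : j ≠ r := by rintro rfl; exact hjk hr
      have h6 : ¬ j < k := by intro h; exact hjk (by have := Fin.lt_def.1 h; omega)
      simp [h5, h6] at hj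

theorem IsUniLower.mul_rowElem {k : Fin n} {g : SL n} (hg : IsUniLower k g) :
    IsUniLower (k + 1) (g * rowElem k (-(g.val k))) := by
  have h2 := isUniLower_rowElem k (-(g.val k))
  have h3 := mul_lower hg.1 h2.1
  refine ⟨?_, fun r => ?_, fun r hr => ?_⟩
  · exact h3.1
  · refine (h3.2 r).trans ?_
    rw [h2.2.1, hg.2.1]; simp
  · rw [Matrix.SpecialLinearGroup.coe_mul, ← Matrix.vecMul_vecMul]
    rcases Nat.lt_succ_iff_lt_or_eq.1 hr with h | h
    · rw [hg.2.2 r h, h2.2.2 r h]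
    · have hrk : r = k := Fin.ext h
      subst hrk
      have h5 : Pi.single r 1 ᵥ* g.val = Pi.single r 1 ᵥ* (rowElem r (g.val r)).val := by
        rw [single_vecMul_rowElem, Matrix.single_one_vecMul]
        funext j
        rcases lt_trichotomy j r with h | h | h
        · simp [h, h.ne]
        · subst h; simp [hg.2.1]
        · simp [hg.1 r j h, h.ne', h.not_gt]
      rw [h5, Matrix.vecMul_vecMul, ← Matrix.SpecialLinearGroup.coe_mul, rowElem_mul_neg]
      simp

/-- The torus element scaling the row operations. -/
noncomputable def rowTorus (k : Fin n) : SL n :=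
  ⟨diagonal fun j => if j < k then (2 : ℂ)⁻¹ else if j = k then 2 ^ (k : ℕ) else 1, by
    rw [det_diagonal, Finset.prod_ite, Finset.prod_const, Finset.prod_ite, Finset.prod_const_one,
      mul_one, Finset.prod_const]
    have h1 : (Finset.univ.filter fun j : Fin n => j < k).card = k := by
      rw [← Fintype.card_subtype]
      exact card_lt_eq k.2.le
    have h2 : ((Finset.univ.filter fun j : Fin n => ¬ j < k).filter fun j => j = k).card = 1 := by
      rw [Finset.card_eq_one]
      refine ⟨k, ?_⟩
      ext j
      simp only [Finset.mem_filter, Finset.mem_univ, true_and, Finset.mem_singleton,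
        and_iff_right_iff_imp]
      rintro rfl
      exact lt_irrefl _
    rw [h1, h2, pow_one, ← mul_pow]
    norm_num⟩

theorem rowTorus_mul_rowElem (k : Fin n) (c : Fin n → ℂ) :
    rowTorus k * rowElem k c = rowElem k ((2 ^ ((k : ℕ) + 1) : ℕ) • c) * rowTorus k := by
  apply Subtype.ext
  rw [Matrix.SpecialLinearGroup.coe_mul, Matrix.SpecialLinearGroup.coe_mul, rowElem_val,
    rowElem_val, mul_add, add_mul, one_mul, mul_one]
  congr 1
  ext r j
  simp only [rowTorus, diagonal_mul, mul_diagonal, rowMatrix, Matrix.of_apply]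
  by_cases h : r = k ∧ j < k
  · obtain ⟨rfl, hj⟩ := h
    simp [hj]
    ring
  · simp [h]

theorem IsUniLower.conj_rowTorus {k : Fin n} {g : SL n} {l : ℕ} (hg : IsUniLower l g) :
    IsUniLower l (rowTorus k * g * (rowTorus k)⁻¹) := by
  set t : Fin n → ℂ := fun j => if j < k then (2 : ℂ)⁻¹ else if j = k then 2 ^ (k : ℕ) else 1
    with ht
  have ht0 : ∀ j, t j ≠ 0 := by
    intro j; simp only [ht]; split_ifs <;> norm_num
  have hT : (rowTorus k).val = diagonal t := rfl
  have hprod : (rowTorus k * g * (rowTorus k)⁻¹).val * diagonal t = diagonal t * g.val := by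
    rw [← hT, ← Matrix.SpecialLinearGroup.coe_mul, inv_mul_cancel_right]
    rfl
  have hent : ∀ r j, (rowTorus k * g * (rowTorus k)⁻¹).val r j = t r * g.val r j * (t j)⁻¹ := by
    intro r j
    have := congrFun (congrFun hprod r) j
    rw [mul_diagonal, diagonal_mul] at this
    rw [← this, mul_inv_cancel_right₀ (ht0 j)]
  refine ⟨fun r j hrj => ?_, fun r => ?_, fun r hr => ?_⟩
  · rw [hent, hg.1 r j hrj]; simp
  · rw [hent, hg.2.1 r, mul_one, mul_inv_cancel₀ (ht0 r)]
  · rw [Matrix.single_one_vecMul]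
    funext j
    have h1 := congrFun (hg.2.2 r hr) j
    rw [Matrix.single_one_vecMul] at h1
    change (rowTorus k * g * (rowTorus k)⁻¹).val r j = _
    have h2 : g.val r j = (Pi.single r 1 : Fin n → ℂ) j := h1
    rw [hent, h2]
    by_cases h : j = r
    · subst h; simp [ht0 j]
    · simp [h]

/-- Every nonzero finite-dimensional representation has a nonzero vector fixed by the lower
unitriangular matrices. -/
theorem exists_fixed_uniLower {X : Type*} [AddCommGroup X] [Module ℂ X] [FiniteDimensional ℂ X]
    (ρ : Representation ℂ (SL n) X) (hX : ∃ x : X, x ≠ 0) :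
    ∃ x : X, x ≠ 0 ∧ ∀ g, IsUniLower 0 g → ρ g x = x := by
  have hmul : ∀ g h x, ρ (g * h) x = ρ g (ρ h x) := fun g h x => by
    rw [map_mul, Module.End.mul_apply]
  suffices h : ∀ l ≤ n, ∃ x : X, x ≠ 0 ∧ ∀ g, IsUniLower (n - l) g → ρ g x = x by
    have := h n le_rfl
    rwa [Nat.sub_self] at this
  intro l
  induction l with
  | zero =>
    intro _
    obtain ⟨x, hx⟩ := hX
    refine ⟨x, hx, fun g hg => ?_⟩
    have : g = 1 := by
      apply Subtype.ext
      ext r j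
      have := congrFun (hg.2.2 r (by have := r.2; omega)) j
      rw [Matrix.single_one_vecMul] at this
      refine (show g.val r j = _ from this).trans ?_
      rw [Pi.single_apply, Matrix.SpecialLinearGroup.coe_one, Matrix.one_apply]
      simp [eq_comm]
    rw [this]; simp
  | succ l ih =>
    intro hl
    obtain ⟨x, hx0, hx⟩ := ih (by omega)
    let k : Fin n := ⟨n - (l + 1), by omega⟩
    have hk : (k : ℕ) + 1 = n - l := by simp only [k]; omega
    rw [← hk] at hx
    let Y₀ : Submodule ℂ X :=
      { carrier := {y | ∀ g, IsUniLower ((k : ℕ) + 1) g → ρ g y = y}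
        zero_mem' := by intro g _; simp
        add_mem' := by intro y z hy hz g hg; rw [map_add, hy g hg, hz g hg]
        smul_mem' := by intro a y hy g hg; rw [map_smul, hy g hg] }
    obtain ⟨y, hyY, hy0, hy⟩ := exists_fixed_of_scaling (q := 2 ^ ((k : ℕ) + 1))
      (by calc 2 = 2 ^ 1 := by norm_num
            _ ≤ 2 ^ ((k : ℕ) + 1) := Nat.pow_le_pow_right (by norm_num) (by omega))
      (fun c : Fin n → ℂ => ρ (rowElem k c)) (by simp [rowElem_zero])
      (fun a b => by simp [rowElem_add]) (S := ρ (rowTorus k)⁻¹)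
      (Function.LeftInverse.injective (g := ρ (rowTorus k)) fun x => by
        rw [← hmul, mul_inv_cancel]; simp)
      (fun a x => by
        rw [← hmul, ← hmul]
        congr 2
        rw [eq_inv_mul_iff_mul_eq, ← mul_assoc, rowTorus_mul_rowElem, mul_inv_cancel_right])
      (Y₀ := Y₀) (by
        intro h
        have : x ∈ Y₀ := hx
        rw [h, Submodule.mem_bot] at this
        exact hx0 this)
      (by
        intro a z hz g hg
        have h1 := hz _ (hg.conj_rowElem a)
        rw [← hmul]
        calc ρ (g * rowElem k a) z = ρ (rowElem k a * (rowElem k (-a) * g * rowElem k a)) z := by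
              congr 2
              rw [← mul_assoc, ← mul_assoc, rowElem_mul_neg, one_mul]
          _ = _ := by rw [hmul, h1])
      (by
        intro z hz g hg
        have h1 := hz _ (hg.conj_rowTorus (k := k))
        rw [← hmul]
        calc ρ (g * (rowTorus k)⁻¹) z =
              ρ ((rowTorus k)⁻¹ * (rowTorus k * g * (rowTorus k)⁻¹)) z := by
              congr 2
              group
          _ = _ := by rw [hmul, h1])
    refine ⟨y, hy0, fun g hg => ?_⟩
    have hg' : IsUniLower (k : ℕ) g := hg
    have h1 := hyY _ hg'.mul_rowElem
    calc ρ g y = ρ (g * rowElem k (-(g.val k)) * rowElem k (g.val k)) y := by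
          rw [mul_assoc, rowElem_neg_mul, mul_one]
      _ = y := by rw [hmul, hy, h1]

end LowerUnipotent

end Saturation

namespace Saturation

open Matrix MvPolynomial

section Weights

variable {n : ℕ}

/-- The entries of a weight, extended by zero. -/
def entry (a : Fin n → ℤ) (k : ℕ) : ℤ := if h : k < n then a ⟨k, h⟩ else 0

/-- The coefficients of a dominant weight on the fundamental weights. -/
def expo (a : Fin n → ℤ) (k : ℕ) : ℕ :=
  if k + 1 < n then (entry a k - entry a (k + 1)).toNat else 0

theorem expo_nsmul (m : ℕ) (a : Fin n → ℤ) (k : ℕ) : expo (m • a) k = m * expo a k := by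
  unfold expo
  split_ifs with h
  · have h1 : k < n := by omega
    simp only [entry, h, h1, dif_pos, Pi.smul_apply, nsmul_eq_mul, ← mul_sub]
    generalize a ⟨k, h1⟩ - a ⟨k + 1, h⟩ = z
    rcases le_total 0 z with hz | hz
    · lift z to ℕ using hz
      rw [Int.toNat_natCast, ← Nat.cast_mul, Int.toNat_natCast]
    · rw [Int.toNat_of_nonpos hz, mul_zero, Int.toNat_of_nonpos]
      exact mul_nonpos_of_nonneg_of_nonpos (by positivity) hz
  · simp

theorem expo_cast {a : Fin n → ℤ} (ha : SLDominant a) (k : ℕ) :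
    (expo a k : ℤ) = if k + 1 < n then entry a k - entry a (k + 1) else 0 := by
  unfold expo
  split_ifs with h
  · rw [Int.toNat_of_nonneg]
    have h1 : k < n := by omega
    simp only [entry, h, h1, dif_pos, sub_nonneg]
    exact ha _ _ (by simp [Fin.le_def])
  · simp

theorem sum_expo {a : Fin n → ℤ} (ha : SLDominant a) (r : Fin n) :
    ∑ k : Fin n, (if r ≤ k then (expo a k : ℤ) else 0) = a r - entry a (n - 1) := by
  have h1 : ∀ K : ℕ, K ≤ n - 1 → ∑ k ∈ Finset.range K, (if (r : ℕ) ≤ k then (expo a k : ℤ) else 0) =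
      if (r : ℕ) ≤ K then entry a r - entry a K else 0 := by
    intro K hK
    induction K with
    | zero =>
      by_cases h : (r : ℕ) = 0
      · simp [h]
      · simp [h]
    | succ K ih =>
      rw [Finset.sum_range_succ, ih (by omega), expo_cast ha, if_pos (show K + 1 < n by omega)]
      rcases lt_trichotomy (r : ℕ) (K + 1) with h | h | h
      · rw [if_pos (by omega), if_pos (by omega), if_pos (by omega)]; ring
      · rw [if_neg (by omega), if_neg (by omega), if_pos (by omega), h]; ring
      · rw [if_neg (by omega), if_neg (by omega), if_neg (by omega)]; ring
  have h2 : ∑ k : Fin n, (if r ≤ k then (expo a k : ℤ) else 0) =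
      ∑ k ∈ Finset.range n, (if (r : ℕ) ≤ k then (expo a k : ℤ) else 0) := by
    rw [Finset.sum_range]
    rfl
  have hn : n = (n - 1) + 1 := by have := r.2; omega
  have h3 := h1 (n - 1) le_rfl
  have hr : entry a r = a r := by simp [entry]
  rw [if_pos (by have := r.2; omega), hr] at h3
  have h4 : expo a (n - 1) = 0 := by unfold expo; rw [if_neg (by omega)]
  have h5 : Finset.range n = Finset.range ((n - 1) + 1) := congrArg _ hn
  rw [h2, ← h3, h5, Finset.sum_range_succ, h4]
  simp

theorem prod_zpow_eq {a : Fin n → ℤ} (ha : SLDominant a) {b : Fin n → ℂ} (hb : ∏ r, b r = 1) :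
    ∏ k : Fin n, (∏ r : {r : Fin n // (r : ℕ) < (k : ℕ) + 1}, b r) ^ expo a k =
      ∏ r, b r ^ a r := by
  have hb0 : ∀ r, b r ≠ 0 := fun r h => by
    rw [Finset.prod_eq_zero (Finset.mem_univ r) h] at hb
    exact zero_ne_one hb
  have h1 : ∀ k : Fin n, (∏ r : {r : Fin n // (r : ℕ) < (k : ℕ) + 1}, b r) ^ expo a k =
      ∏ r : Fin n, b r ^ (if r ≤ k then (expo a k : ℤ) else 0) := by
    intro k
    rw [← Finset.prod_subtype (Finset.univ.filter fun r : Fin n => (r : ℕ) < (k : ℕ) + 1) (by simp)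
      b, ← Finset.prod_pow, Finset.prod_filter]
    refine Finset.prod_congr rfl fun r _ => ?_
    have : (r : ℕ) < (k : ℕ) + 1 ↔ r ≤ k := by rw [Fin.le_def]; omega
    by_cases h : r ≤ k
    · simp [this, h]
    · simp [this, h]
  have hz : ∀ (r : Fin n) (F : Fin n → ℤ), ∏ k, b r ^ F k = b r ^ ∑ k, F k := by
    intro r F
    induction (Finset.univ : Finset (Fin n)) using Finset.induction_on with
    | empty => simp
    | insert k s hk ih => rw [Finset.prod_insert hk, Finset.sum_insert hk, zpow_add₀ (hb0 r), ih]
  simp only [h1]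
  rw [Finset.prod_comm]
  simp only [hz, sum_expo ha, zpow_sub₀ (hb0 _)]
  rw [Finset.prod_div_distrib, Finset.prod_zpow, hb, _root_.one_zpow, div_one]

end Weights

section BigCell

variable {n : ℕ}

/-- A matrix with nonvanishing leading minors becomes upper triangular after multiplication by a
lower unitriangular matrix. -/
theorem exists_lower_mul_upper (g : Matrix (Fin n) (Fin n) ℂ)
    (hg : ∀ k : Fin n, lead k g ≠ 0) :
    ∃ u : Matrix (Fin n) (Fin n) ℂ, (∀ r j, r < j → u r j = 0) ∧ (∀ r, u r r = 1) ∧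
      ∀ r j, j < r → (u * g) r j = 0 := by
  have h1 : ∀ k : Fin n, ∃ c : {r : Fin n // (r : ℕ) < k} → ℂ,
      c ᵥ* (g.submatrix (Subtype.val : {r : Fin n // (r : ℕ) < k} → Fin n) Subtype.val) =
        fun r : {r : Fin n // (r : ℕ) < k} => - g k r := by
    intro k
    have hu : IsUnit (g.submatrix (Subtype.val : {r : Fin n // (r : ℕ) < k} → Fin n)
        (Subtype.val : {r : Fin n // (r : ℕ) < k} → Fin n)) :=
      (Matrix.isUnit_iff_isUnit_det _).2 (isUnit_iff_ne_zero.2 (hg k))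
    exact Matrix.vecMul_surjective_iff_isUnit.2 hu _
  choose c hc using h1
  refine ⟨Matrix.of fun k r => if h : (r : ℕ) < k then c k ⟨r, h⟩ else if r = k then 1 else 0,
    ?_, ?_, ?_⟩
  · intro r j h
    simp [h.not_gt, h.ne']
  · intro r; simp
  · intro k j hj
    have h2 := congrFun (hc k) ⟨j, hj⟩
    simp only [Matrix.vecMul, dotProduct, Matrix.submatrix_apply] at h2
    rw [Matrix.mul_apply, ← Fintype.sum_subtype_add_sum_subtype (fun r : Fin n => (r : ℕ) < k)]
    have h3 : ∑ r : {r : Fin n // (r : ℕ) < k}, (Matrix.of fun k r : Fin n =>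
        if h : (r : ℕ) < k then c k ⟨r, h⟩ else if r = k then 1 else 0) k r * g r j =
        - g k j := by
      rw [← h2]
      refine Finset.sum_congr rfl fun r _ => ?_
      rw [Matrix.of_apply, dif_pos r.2]
    have h4 : ∑ r : {r : Fin n // ¬ (r : ℕ) < k}, (Matrix.of fun k r : Fin n =>
        if h : (r : ℕ) < k then c k ⟨r, h⟩ else if r = k then 1 else 0) k r * g r j =
        g k j := by
      rw [Finset.sum_eq_single ⟨k, lt_irrefl _⟩]
      · simp
      · intro r _ hr
        have : (r : Fin n) ≠ k := fun h => hr (Subtype.ext h)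
        rw [Matrix.of_apply, dif_neg r.2, if_neg this, zero_mul]
      · simp
    rw [h3, h4, neg_add_cancel]

theorem lead_upper (d : ℕ) {b : Matrix (Fin n) (Fin n) ℂ} (hb : ∀ r j, j < r → b r j = 0) :
    lead d b = ∏ r : {r : Fin n // (r : ℕ) < d}, b r r := by
  rw [lead, Matrix.det_of_isUpperTriangular]
  · rfl
  · intro r r' h
    exact hb _ _ h

/-- The product of powers of leading minors attached to a weight. -/
def leadWeight (a : Fin n → ℤ) (g : Matrix (Fin n) (Fin n) ℂ) : ℂ :=
  ∏ k : Fin n, lead ((k : ℕ) + 1) g ^ expo a k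

variable {V : Type*} [AddCommGroup V] [Module ℂ V]

theorem matrixCoeff_bigCell {ρ : Representation ℂ (SL n) V} {a : Fin n → ℤ} (ha : SLDominant a)
    {v : V} (hv : IsHWVector ρ a v) {ξ : Module.Dual ℂ V}
    (hξ : ∀ g, IsUniLower 0 g → ∀ x, ξ (ρ g x) = ξ x) (g : SL n)
    (hg : ∀ k : Fin n, lead k g.val ≠ 0) : ξ (ρ g v) = ξ v * leadWeight a g.val := by
  have hmul : ∀ g h x, ρ (g * h) x = ρ g (ρ h x) := fun g h x => by
    rw [map_mul, Module.End.mul_apply]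
  obtain ⟨u, hu1, hu2, hu3⟩ := exists_lower_mul_upper g.val hg
  have hudet : u.det = 1 := by
    rw [Matrix.det_of_isLowerTriangular _ fun r j h => hu1 r j h]
    simp [hu2]
  let U : SL n := ⟨u, hudet⟩
  have hU : IsUniLower 0 U := ⟨hu1, hu2, fun r h => absurd h (Nat.not_lt_zero _)⟩
  set b := u * g.val with hb
  have hbdet : ∏ r, b r r = 1 := by
    rw [← Matrix.det_of_isUpperTriangular (M := b) fun r j h => hu3 r j h, hb, Matrix.det_mul, hudet,
      one_mul]
    exact g.2
  have hb0 : ∀ r, b r r ≠ 0 := fun r h => by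
    rw [Finset.prod_eq_zero (f := fun r => b r r) (Finset.mem_univ r) h] at hbdet
    exact zero_ne_one hbdet
  let T : SL n := ⟨diagonal fun r => b r r, by rw [det_diagonal, hbdet]⟩
  let B : SL n := T⁻¹ * (U * g)
  have hTB : T * B = U * g := by simp [B]
  have hent : ∀ r j, b r r * B.val r j = b r j := by
    intro r j
    have h1 : (T * B).val r j = (U * g).val r j := by rw [hTB]
    have h2 : (T * B).val = diagonal (fun r => b r r) * B.val := rfl
    rw [h2, diagonal_mul] at h1
    exact h1
  have hB : SLIsUniUpper B := by
    refine ⟨fun r => mul_left_cancel₀ (hb0 r) ?_, fun r j h => mul_left_cancel₀ (hb0 r) ?_⟩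
    · rw [hent, mul_one]
    · rw [hent, hu3 r j h, mul_zero]
  have hT : SLIsDiag T := fun r j h => diagonal_apply_ne _ h
  have h1 : ξ (ρ g v) = (∏ r, b r r ^ a r) * ξ v := by
    rw [← hξ U hU, ← hmul, ← hTB, hmul, hv.2.1 B hB, hv.2.2 T hT, map_smul, smul_eq_mul]
    simp [T]
  rw [h1, mul_comm, ← prod_zpow_eq ha hbdet, leadWeight]
  congr 1
  refine Finset.prod_congr rfl fun k _ => ?_
  rw [← lead_upper _ hu3, hb, lead_lower_mul _ hu1]
  simp [hu2]

end BigCell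

section MatrixCoeff

/-- A finite-dimensional space of functions is separated by finitely many points. -/
theorem exists_finset_separating {Y : Type*} (F : Submodule ℂ (Y → ℂ)) [FiniteDimensional ℂ F] :
    ∃ P : Finset Y, ∀ φ ∈ F, (∀ y ∈ P, φ y = 0) → φ = 0 := by
  classical
  let Z : Finset Y → Submodule ℂ F := fun P =>
    { carrier := {φ | ∀ y ∈ P, φ.1 y = 0}
      zero_mem' := fun y _ => rfl
      add_mem' := fun {φ ψ} hφ hψ y hy => by
        rw [Submodule.coe_add, Pi.add_apply, hφ y hy, hψ y hy, add_zero]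
      smul_mem' := fun a φ hφ y hy => by
        rw [Submodule.coe_smul, Pi.smul_apply, hφ y hy, smul_zero] }
  obtain ⟨_, ⟨P, rfl⟩, hP⟩ := (wellFounded_lt (α := Submodule ℂ F)).has_min (Set.range Z)
    (Set.range_nonempty Z)
  refine ⟨P, fun φ hφ h0 => funext fun y => ?_⟩
  by_contra hy
  refine hP (Z (insert y P)) ⟨_, rfl⟩ (lt_of_le_of_ne ?_ ?_)
  · exact fun ψ hψ z hz => hψ z (Finset.mem_insert_of_mem hz)
  · intro he
    have h1 : (⟨φ, hφ⟩ : F) ∈ Z P := h0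
    rw [← he] at h1
    exact hy (h1 y (Finset.mem_insert_self _ _))

variable {n : ℕ}

theorem lead_one (d : ℕ) : lead d (1 : Matrix (Fin n) (Fin n) ℂ) = 1 := by
  rw [lead, Matrix.submatrix_one _ Subtype.val_injective, det_one]

/-- Finitely many elements of `SL n` can be moved into the big cell simultaneously. -/
theorem exists_mul_mem_bigCell [NeZero n] (P : Finset (SL n)) :
    ∃ x : SL n, ∀ y ∈ P, ∀ k : Fin n, lead k (x * y).val ≠ 0 := by
  classical
  let G := mvPolynomialX (Fin n) (Fin n) ℂ
  have hev : ∀ (A : Matrix (Fin n) (Fin n) ℂ) (y : SL n) (k : ℕ),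
      eval (fun p : Fin n × Fin n => A p.1 p.2) (lead k (G * y.val.map C)) =
        lead k (A * y.val) := by
    intro A y k
    rw [← lead_map, Matrix.map_mul]
    congr 2
    · exact mvPolynomialX_mapMatrix_eval A
    · ext r q; simp
  have hdet : ∀ A : Matrix (Fin n) (Fin n) ℂ,
      eval (fun p : Fin n × Fin n => A p.1 p.2) G.det = A.det := by
    intro A
    rw [RingHom.map_det]
    exact congrArg _ (mvPolynomialX_mapMatrix_eval A)
  have hne : G.det * ∏ y ∈ P, ∏ k : Fin n, lead k (G * y.val.map C) ≠ 0 := by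
    refine mul_ne_zero (fun h => ?_) (Finset.prod_ne_zero_iff.2 fun y _ =>
      Finset.prod_ne_zero_iff.2 fun k _ h => ?_)
    · have := hdet 1
      rw [h, map_zero, det_one] at this
      exact zero_ne_one this
    · have := hev (y⁻¹).val y k
      rw [h, map_zero, ← Matrix.SpecialLinearGroup.coe_mul, inv_mul_cancel,
        Matrix.SpecialLinearGroup.coe_one, lead_one] at this
      exact zero_ne_one this
  obtain ⟨pt, hpt⟩ : ∃ pt, eval pt (G.det * ∏ y ∈ P, ∏ k : Fin n, lead k (G * y.val.map C)) ≠ 0 := by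
    by_contra! h
    exact hne (MvPolynomial.funext fun pt => by rw [h pt, map_zero])
  let A : Matrix (Fin n) (Fin n) ℂ := Matrix.of fun r q => pt (r, q)
  have hA : pt = fun p : Fin n × Fin n => A p.1 p.2 := rfl
  rw [hA, map_mul, hdet, map_prod] at hpt
  obtain ⟨a, x, -, hx, hax⟩ := exists_smul_det_eq_one (left_ne_zero_of_mul hpt)
  refine ⟨⟨x, hx⟩, fun y hy k h => ?_⟩
  have h1 := Finset.prod_ne_zero_iff.1 (right_ne_zero_of_mul hpt) y hy
  rw [map_prod] at h1
  have h2 := Finset.prod_ne_zero_iff.1 h1 k (Finset.mem_univ _)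
  rw [hev, hax, Matrix.smul_mul, lead_smul k.2.le] at h2
  exact right_ne_zero_of_mul h2 h

/-- The index set of the leading minors attached to a weight. -/
abbrev WeightIdx (a : Fin n → ℤ) := Σ k : Fin n, Fin (expo a k)

theorem prod_lead_eq_leadWeight (a : Fin n → ℤ) (g : Matrix (Fin n) (Fin n) ℂ) :
    ∏ j : WeightIdx a, lead ((j.1 : ℕ) + 1) g = leadWeight a g := by
  rw [Fintype.prod_sigma]
  simp [leadWeight]

theorem leadWeight_one (a : Fin n → ℤ) : leadWeight a (1 : Matrix (Fin n) (Fin n) ℂ) = 1 := by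
  simp [leadWeight, lead_one]

theorem leadWeight_nsmul (m : ℕ) (a : Fin n → ℤ) (g : Matrix (Fin n) (Fin n) ℂ) :
    leadWeight (m • a) g = leadWeight a g ^ m := by
  simp only [leadWeight, expo_nsmul, ← Finset.prod_pow]
  exact Finset.prod_congr rfl fun k _ => by rw [mul_comm, pow_mul]

variable {V : Type*} [AddCommGroup V] [Module ℂ V]

theorem span_orbit_eq_top {ρ : Representation ℂ (SL n) V} (hρ : RepIsIrreducible ρ) {v : V}
    (hv : v ≠ 0) : Submodule.span ℂ (Set.range fun g => ρ g v) = ⊤ := by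
  refine (hρ.2 _ fun g x hx => ?_).resolve_left fun h => ?_
  · have h1 : (Submodule.span ℂ (Set.range fun g => ρ g v)).map (ρ g) ≤
        Submodule.span ℂ (Set.range fun g => ρ g v) := by
      rw [Submodule.map_span, Submodule.span_le]
      rintro _ ⟨_, ⟨h, rfl⟩, rfl⟩
      refine Submodule.subset_span ⟨g * h, ?_⟩
      simp
    exact h1 (Submodule.mem_map_of_mem hx)
  · have h1 : v ∈ Submodule.span ℂ (Set.range fun g => ρ g v) :=
      Submodule.subset_span ⟨1, by simp⟩
    rw [h, Submodule.mem_bot] at h1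
    exact hv h1

/-- The matrix coefficient of a highest weight vector and a lowest weight covector is a product
of leading minors. -/
theorem exists_matrixCoeff [NeZero n] [FiniteDimensional ℂ V] {ρ : Representation ℂ (SL n) V}
    (hρ : RepIsIrreducible ρ) {a : Fin n → ℤ} (ha : SLDominant a) {v : V}
    (hv : IsHWVector ρ a v) :
    ∃ ξ : Module.Dual ℂ V, ∀ g : SL n, ξ (ρ g v) = leadWeight a g.val := by
  classical
  have hdual : ∃ ξ : Module.Dual ℂ V, ξ ≠ 0 := by
    obtain ⟨x, hx⟩ := hρ.1
    by_contra! h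
    exact hx ((Module.forall_dual_apply_eq_zero_iff ℂ x).1 fun f => by rw [h f]; rfl)
  obtain ⟨ξ, hξ0, hξ⟩ := exists_fixed_uniLower ρ.dual hdual
  have hξ' : ∀ g, IsUniLower 0 g → ∀ x, ξ (ρ g x) = ξ x := by
    intro g hg x
    have h1 := LinearMap.congr_fun (hξ g hg) (ρ g x)
    rw [← h1, Representation.dual_apply, Module.Dual.transpose_apply, LinearMap.comp_apply,
      ← Module.End.mul_apply, ← map_mul, inv_mul_cancel, map_one, Module.End.one_apply]
  let Φ : Module.Dual ℂ V →ₗ[ℂ] (SL n → ℂ) := LinearMap.pi fun y => LinearMap.applyₗ (ρ y v)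
  let d : WeightIdx a → ℕ := fun j => (j.1 : ℕ) + 1
  let i : WeightIdx a → Unit := fun _ => ()
  let M : ColIdx n d → SL n → ℂ := fun I y => minors i d (fun _ => (y.val)ᵀ) I
  let F : Submodule ℂ (SL n → ℂ) := LinearMap.range Φ ⊔ Submodule.span ℂ (Set.range M)
  have hC : (permCount n d : ℂ) ≠ 0 := Nat.cast_ne_zero.2 (permCount_ne_zero d)
  have hF : ∀ x : SL n, (fun y => ξ (ρ (x * y) v) - ξ v * leadWeight a (x * y).val) ∈ F := by
    intro x
    refine F.sub_mem (Submodule.mem_sup_left ⟨ξ ∘ₗ ρ x, ?_⟩) (Submodule.mem_sup_right ?_)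
    · funext y
      simp [Φ]
    · have h1 : (fun y : SL n => ξ v * leadWeight a (x * y).val) = ∑ I : ColIdx n d,
          (ξ v * (permCount n d : ℂ)⁻¹ * minors i d (fun _ => x.val) I) • M I := by
        funext y
        have h2 := permCount_mul_prod_lead i d (fun _ => x.val) fun _ => y.val
        rw [prod_lead_eq_leadWeight] at h2
        rw [Finset.sum_apply]
        simp only [Pi.smul_apply, smul_eq_mul, mul_assoc, ← Finset.mul_sum, M]
        rw [← h2, inv_mul_cancel_left₀ hC]
        rfl
      rw [h1]
      exact Submodule.sum_mem _ fun I _ => Submodule.smul_mem _ _ (Submodule.subset_span ⟨I, rfl⟩)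
  have : FiniteDimensional ℂ (Submodule.span ℂ (Set.range M)) :=
    FiniteDimensional.span_of_finite ℂ (Set.finite_range M)
  obtain ⟨P, hP⟩ := exists_finset_separating F
  obtain ⟨x, hx⟩ := exists_mul_mem_bigCell P
  have h0 := hP _ (hF x) fun y hy => by rw [matrixCoeff_bigCell ha hv hξ' _ (hx y hy), sub_self]
  have hall : ∀ g, ξ (ρ g v) = ξ v * leadWeight a g.val := by
    intro g
    have := congrFun h0 (x⁻¹ * g)
    rw [Pi.zero_apply, sub_eq_zero, mul_inv_cancel_left] at this
    exact this
  have hξv : ξ v ≠ 0 := by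
    intro h
    refine hξ0 (LinearMap.ext_on (span_orbit_eq_top hρ hv.1) ?_)
    rintro _ ⟨g, rfl⟩
    simp only
    rw [hall, h, zero_mul, LinearMap.zero_apply]
  refine ⟨(ξ v)⁻¹ • ξ, fun g => ?_⟩
  rw [LinearMap.smul_apply, hall, smul_eq_mul, inv_mul_cancel_left₀ hξv]

end MatrixCoeff

end Saturation

namespace Saturation

open Matrix

section TensorFunctionals

theorem tprod_mem_of_forall_mem {ι : Type*} [Finite ι] {V : ι → Type*} [∀ i, AddCommGroup (V i)]
    [∀ i, Module ℂ (V i)] {S : ∀ i, Set (V i)} (hS : ∀ i, Submodule.span ℂ (S i) = ⊤)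
    (p : Submodule ℂ (⨂[ℂ] i, V i))
    (hp : ∀ f : ∀ i, V i, (∀ i, f i ∈ S i) → PiTensorProduct.tprod ℂ f ∈ p) (f : ∀ i, V i) :
    PiTensorProduct.tprod ℂ f ∈ p := by
  classical
  have := Fintype.ofFinite ι
  suffices h : ∀ A : Finset ι, ∀ f : ∀ i, V i, (∀ i, i ∉ A → f i ∈ S i) →
      PiTensorProduct.tprod ℂ f ∈ p from h Finset.univ f fun i hi => absurd (Finset.mem_univ i) hi
  intro A
  induction A using Finset.induction_on with
  | empty => exact fun f hf => hp f fun i => hf i (Finset.notMem_empty i)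
  | insert a A ha ih =>
    intro f hf
    have h1 : ∀ x ∈ Submodule.span ℂ (S a),
        PiTensorProduct.tprod ℂ (Function.update f a x) ∈ p := by
      intro x hx
      induction hx using Submodule.span_induction with
      | mem x hx =>
        refine ih _ fun i hi => ?_
        by_cases hia : i = a
        · subst hia
          rwa [Function.update_self]
        · rw [Function.update_of_ne hia]
          exact hf i (by simp [hia, hi])
      | zero => rw [MultilinearMap.map_update_zero]; exact p.zero_mem
      | add x y _ _ hx hy => rw [MultilinearMap.map_update_add]; exact p.add_mem hx hy
      | smul c x _ hx => rw [MultilinearMap.map_update_smul]; exact p.smul_mem c hx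
    have h2 := h1 (f a) (by rw [hS]; trivial)
    rwa [Function.update_eq_self] at h2

theorem span_tprod_image_eq_top {ι : Type*} [Finite ι] {V : ι → Type*} [∀ i, AddCommGroup (V i)]
    [∀ i, Module ℂ (V i)] {S : ∀ i, Set (V i)} (hS : ∀ i, Submodule.span ℂ (S i) = ⊤) :
    Submodule.span ℂ (PiTensorProduct.tprod ℂ '' {f : ∀ i, V i | ∀ i, f i ∈ S i}) = ⊤ := by
  rw [eq_top_iff, ← PiTensorProduct.span_tprod_eq_top, Submodule.span_le]
  rintro _ ⟨f, rfl⟩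
  exact tprod_mem_of_forall_mem hS (Submodule.span ℂ _)
    (fun f hf => Submodule.subset_span (Set.mem_image_of_mem _ hf)) f

variable {n s : ℕ} {V : Fin s → Type*} [∀ i, AddCommGroup (V i)] [∀ i, Module ℂ (V i)]
  {ρ : ∀ i, Representation ℂ (SL n) (V i)}

theorem span_dual_orbit_eq_top {V : Type*} [AddCommGroup V] [Module ℂ V] [FiniteDimensional ℂ V]
    {ρ : Representation ℂ (SL n) V} (hρ : RepIsIrreducible ρ) {ξ : Module.Dual ℂ V} (hξ : ξ ≠ 0) :
    Submodule.span ℂ (Set.range fun g => ξ ∘ₗ ρ g) = ⊤ := by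
  refine Submodule.span_eq_top_of_ne_zero fun z hz => ?_
  by_contra! h
  refine hξ (LinearMap.ext_on (span_orbit_eq_top hρ hz) ?_)
  rintro _ ⟨g, rfl⟩
  exact h _ ⟨g, rfl⟩

/-- Every tensor is a combination of translates of a pure tensor of nonzero vectors. -/
theorem exists_eq_sum_tprod (hρ : ∀ i, RepIsIrreducible (ρ i)) {v : ∀ i, V i} (hv : ∀ i, v i ≠ 0)
    (t : ⨂[ℂ] i, V i) :
    ∃ (L : ℕ) (c : Fin L → ℂ) (X : Fin L → Fin s → SL n),
      t = ∑ l, c l • PiTensorProduct.tprod ℂ fun i => ρ i (X l i) (v i) := by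
  have ht : t ∈ Submodule.span ℂ (PiTensorProduct.tprod ℂ ''
      {f : ∀ i, V i | ∀ i, f i ∈ Set.range fun g => ρ i g (v i)}) := by
    rw [span_tprod_image_eq_top fun i => span_orbit_eq_top (hρ i) (hv i)]
    trivial
  obtain ⟨L, c, u, hu⟩ := Submodule.mem_span_set'.1 ht
  choose f hf hfu using fun l => (u l).2
  choose X hX using hf
  refine ⟨L, c, X, ?_⟩
  rw [← hu]
  refine Finset.sum_congr rfl fun l _ => ?_
  rw [← hfu]
  congr 2
  exact (funext (hX l)).symm

/-- The function on a product of copies of the group attached to a tensor and to covectors. -/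
noncomputable def tensorCoeff (ρ : ∀ i, Representation ℂ (SL n) (V i))
    (ξ : ∀ i, Module.Dual ℂ (V i)) (t : ⨂[ℂ] i, V i) (g : Fin s → SL n) : ℂ :=
  PiTensorProduct.dualDistrib (PiTensorProduct.tprod ℂ fun i => ξ i ∘ₗ ρ i (g i)) t

theorem tensorCoeff_zero (ξ : ∀ i, Module.Dual ℂ (V i)) (g : Fin s → SL n) :
    tensorCoeff ρ ξ 0 g = 0 :=
  map_zero _

theorem tensorCoeff_sub (ξ : ∀ i, Module.Dual ℂ (V i)) (t t' : ⨂[ℂ] i, V i) (g : Fin s → SL n) :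
    tensorCoeff ρ ξ (t - t') g = tensorCoeff ρ ξ t g - tensorCoeff ρ ξ t' g :=
  map_sub _ _ _

theorem tensorCoeff_map (ξ : ∀ i, Module.Dual ℂ (V i)) (t : ⨂[ℂ] i, V i) (g : Fin s → SL n)
    (h : SL n) : tensorCoeff ρ ξ (piTensorRep ρ h t) g = tensorCoeff ρ ξ t fun i => g i * h := by
  have h1 : (PiTensorProduct.dualDistrib (PiTensorProduct.tprod ℂ fun i => ξ i ∘ₗ ρ i (g i))) ∘ₗ
      (piTensorRep ρ h) =
      PiTensorProduct.dualDistrib (PiTensorProduct.tprod ℂ fun i => ξ i ∘ₗ ρ i (g i * h)) := by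
    refine PiTensorProduct.ext (MultilinearMap.ext fun x => ?_)
    simp [piTensorRep]
  exact LinearMap.congr_fun h1 t

theorem eq_zero_of_tensorCoeff [∀ i, FiniteDimensional ℂ (V i)] (hρ : ∀ i, RepIsIrreducible (ρ i))
    {ξ : ∀ i, Module.Dual ℂ (V i)} (hξ : ∀ i, ξ i ≠ 0) {t : ⨂[ℂ] i, V i}
    (ht : ∀ g, tensorCoeff ρ ξ t g = 0) : t = 0 := by
  have h1 : ∀ z : ⨂[ℂ] i, Module.Dual ℂ (V i), PiTensorProduct.dualDistrib z t = 0 := by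
    intro z
    have hz : z ∈ Submodule.span ℂ (PiTensorProduct.tprod ℂ ''
        {f : ∀ i, Module.Dual ℂ (V i) | ∀ i, f i ∈ Set.range fun g => ξ i ∘ₗ ρ i g}) := by
      rw [span_tprod_image_eq_top fun i => span_dual_orbit_eq_top (hρ i) (hξ i)]
      trivial
    induction hz using Submodule.span_induction with
    | mem z hz =>
      obtain ⟨f, hf, rfl⟩ := hz
      choose g hg using hf
      rw [← funext hg]
      exact ht g
    | zero => simp
    | add z w _ _ hz hw => rw [map_add, LinearMap.add_apply, hz, hw, add_zero]
    | smul a z _ hz => rw [map_smul, LinearMap.smul_apply, hz, smul_zero]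
  refine (Module.forall_dual_apply_eq_zero_iff ℂ t).1 fun f => ?_
  have h2 := h1 (PiTensorProduct.dualDistribEquiv.symm f)
  have h3 : PiTensorProduct.dualDistribEquiv (PiTensorProduct.dualDistribEquiv.symm f) = f :=
    LinearEquiv.apply_symm_apply _ f
  rw [← h3]
  exact h2

/-- The function attached to a combination of translates of highest weight vectors. -/
theorem tensorCoeff_sum {a : Fin s → Fin n → ℤ} {ξ : ∀ i, Module.Dual ℂ (V i)} {v : ∀ i, V i}
    (hξ : ∀ i (g : SL n), ξ i (ρ i g (v i)) = leadWeight (a i) g.val) {L : ℕ} (c : Fin L → ℂ)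
    (X : Fin L → Fin s → SL n) (g : Fin s → SL n) :
    tensorCoeff ρ ξ (∑ l, c l • PiTensorProduct.tprod ℂ fun i => ρ i (X l i) (v i)) g =
      ∑ l, c l * ∏ i, leadWeight (a i) ((g i).val * (X l i).val) := by
  rw [tensorCoeff, map_sum]
  refine Finset.sum_congr rfl fun l _ => ?_
  rw [map_smul, PiTensorProduct.dualDistrib_apply, smul_eq_mul]
  congr 1
  refine Finset.prod_congr rfl fun i _ => ?_
  rw [LinearMap.comp_apply, ← Module.End.mul_apply, ← map_mul, hξ]
  rfl

end TensorFunctionals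

section Assembly

variable {n s : ℕ}

/-- The index set of the leading minors attached to a family of weights. -/
abbrev FamilyIdx (lam : Fin s → Fin n → ℤ) := Σ i : Fin s, WeightIdx (lam i)

theorem leadSum_family (m : ℕ) (lam : Fin s → Fin n → ℤ) {L : ℕ} (c : Fin L → ℂ)
    (X : Fin L → Fin s → Matrix (Fin n) (Fin n) ℂ) (g : Fin s → Matrix (Fin n) (Fin n) ℂ) :
    leadSum m (fun j : FamilyIdx lam => j.1) (fun j => (j.2.1 : ℕ) + 1) c X g =
      ∑ l, c l * ∏ i, leadWeight (m • lam i) (g i * X l i) := by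
  refine Finset.sum_congr rfl fun l _ => ?_
  rw [Fintype.prod_sigma]
  have h1 : ∀ i, leadWeight (m • lam i) (g i * X l i) =
      ∏ j : WeightIdx (lam i), lead ((j.1 : ℕ) + 1) (g i * X l i) ^ m := fun i => by
    rw [leadWeight_nsmul, ← prod_lead_eq_leadWeight, Finset.prod_pow]
  simp only [h1]
  rfl

theorem sum_family_dvd {lam : Fin s → Fin n → ℤ} (hdom : ∀ i, SLDominant (lam i))
    (hQ : (n : ℤ) ∣ ∑ i, ∑ j, lam i j) : n ∣ ∑ j : FamilyIdx lam, ((j.2.1 : ℕ) + 1) := by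
  have h1 : ∀ i, ((∑ j : WeightIdx (lam i), ((j.1 : ℕ) + 1) : ℕ) : ℤ) =
      ∑ r, lam i r - n * entry (lam i) (n - 1) := by
    intro i
    have h2 : ∑ r, ∑ k : Fin n, (if r ≤ k then (expo (lam i) k : ℤ) else 0) =
        ∑ r, lam i r - n * entry (lam i) (n - 1) := by
      simp only [sum_expo (hdom i), Finset.sum_sub_distrib]
      simp
    rw [← h2, Finset.sum_comm, Fintype.sum_sigma]
    push_cast
    refine Finset.sum_congr rfl fun k _ => ?_
    rw [← Finset.sum_filter, Finset.sum_const, Finset.sum_const]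
    have h3 : (Finset.univ.filter fun r : Fin n => r ≤ k).card = (k : ℕ) + 1 := by
      have : (Finset.univ.filter fun r : Fin n => r ≤ k) = Finset.Iic k := by ext; simp
      rw [this, Fin.card_Iic]
    rw [h3]
    simp [mul_comm]
  rw [← Int.natCast_dvd_natCast, Fintype.sum_sigma, Nat.cast_sum]
  simp only [h1, Finset.sum_sub_distrib]
  exact dvd_sub hQ (Finset.dvd_sum fun i _ => dvd_mul_right _ _)

theorem tprod_ne_zero {W : Fin s → Type*} [∀ i, AddCommGroup (W i)] [∀ i, Module ℂ (W i)]
    {w : ∀ i, W i} (hw : ∀ i, w i ≠ 0) : PiTensorProduct.tprod ℂ w ≠ 0 := by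
  have h1 : ∀ i, ∃ f : Module.Dual ℂ (W i), f (w i) ≠ 0 := fun i => by
    by_contra! h
    exact hw i ((Module.forall_dual_apply_eq_zero_iff ℂ _).1 h)
  choose f hf using h1
  intro h0
  have h2 := PiTensorProduct.dualDistrib_apply f w
  rw [h0, map_zero] at h2
  exact Finset.prod_ne_zero_iff.2 (fun i _ => hf i) h2.symm

theorem ne_zero_of_matrixCoeff {U : Type*} [AddCommGroup U] [Module ℂ U]
    {τ : Representation ℂ (SL n) U} {a : Fin n → ℤ} {ξ : Module.Dual ℂ U} {u : U}
    (h : ∀ g : SL n, ξ (τ g u) = leadWeight a g.val) : ξ ≠ 0 := by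
  rintro rfl
  have h1 := h 1
  rw [Matrix.SpecialLinearGroup.coe_one, leadWeight_one] at h1
  exact zero_ne_one h1

/-- Saturation: an invariant of the tensor product for the multiples `m • lam i` yields one for the
weights `lam i`. -/
theorem hasInvariant_of_smul [NeZero n] {m : ℕ} (hm : 0 < m) {lam : Fin s → Fin n → ℤ}
    (hdom : ∀ i, SLDominant (lam i)) (hQ : (n : ℤ) ∣ ∑ i, ∑ j, lam i j)
    {V : Fin s → Type*} [∀ i, AddCommGroup (V i)] [∀ i, Module ℂ (V i)]
    [∀ i, FiniteDimensional ℂ (V i)] {ρ : ∀ i, Representation ℂ (SL n) (V i)}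
    (hirr : ∀ i, RepIsIrreducible (ρ i)) (hhw : ∀ i, Occurs (ρ i) (m • lam i))
    (hinv : HasInvariant (piTensorRep ρ))
    {W : Fin s → Type*} [∀ i, AddCommGroup (W i)] [∀ i, Module ℂ (W i)]
    [∀ i, FiniteDimensional ℂ (W i)] {σ : ∀ i, Representation ℂ (SL n) (W i)}
    (hirr' : ∀ i, RepIsIrreducible (σ i)) (hhw' : ∀ i, Occurs (σ i) (lam i)) :
    HasInvariant (piTensorRep σ) := by
  classical
  choose v hv using hhw
  choose w hw using hhw'
  have hdom' : ∀ i, SLDominant (m • lam i) := fun i j k h => nsmul_le_nsmul_right (hdom i j k h) m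
  choose ξ hξ using fun i => exists_matrixCoeff (hirr i) (hdom' i) (hv i)
  choose η hη using fun i => exists_matrixCoeff (hirr' i) (hdom i) (hw i)
  obtain ⟨t, ht0, ht⟩ := hinv
  obtain ⟨L, c, X, hX⟩ := exists_eq_sum_tprod hirr (fun i => (hv i).1) t
  set Y : Fin L → Fin s → Matrix (Fin n) (Fin n) ℂ := fun l i => (X l i).val
  let fi : FamilyIdx lam → Fin s := fun j => j.1
  let d : FamilyIdx lam → ℕ := fun j => (j.2.1 : ℕ) + 1
  have hd : ∀ j, d j ≤ n := fun j => j.2.1.2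
  obtain ⟨N, hN⟩ := sum_family_dvd hdom hQ
  let e : Rows n d ≃ Fin n × Fin N := Fintype.equivOfCardEq (card_rows hd hN)
  have hcoeff : ∀ g : Fin s → SL n, tensorCoeff ρ ξ t g =
      leadSum m fi d c Y fun i => (g i).val := fun g => by
    rw [hX]
    exact (tensorCoeff_sum hξ c X g).trans (leadSum_family m lam c Y _).symm
  have hSL : ∀ (g : Fin s → Matrix (Fin n) (Fin n) ℂ) (h : Matrix (Fin n) (Fin n) ℂ),
      (∀ i, (g i).det = 1) → h.det = 1 →
      leadSum m fi d c Y (fun i => g i * h) = leadSum m fi d c Y g := by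
    intro g h hg hh
    let H : SL n := ⟨h, hh⟩
    let G : Fin s → SL n := fun i => ⟨g i, hg i⟩
    have h1 : tensorCoeff ρ ξ t G = tensorCoeff ρ ξ t fun i => G i * H := by
      rw [← tensorCoeff_map, ht]
    rw [hcoeff, hcoeff] at h1
    exact h1.symm
  obtain ⟨g₀, hg₀⟩ : ∃ g₀ : Fin s → SL n, leadSum m fi d c Y (fun i => (g₀ i).val) ≠ 0 := by
    by_contra! h
    exact ht0 (eq_zero_of_tensorCoeff hirr (fun i => ne_zero_of_matrixCoeff (hξ i)) fun g => by rw [hcoeff, h])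
  obtain ⟨g, u, hg, hgu⟩ := exists_rowDet_ne_zero_of_leadSum hm hd hN hSL hg₀ e
  obtain ⟨L', c', X', hX', hrow⟩ := rowDet_eq_leadSum fi d e u
  set τ : ⨂[ℂ] i, W i := ∑ l, c' l • PiTensorProduct.tprod ℂ fun i => σ i ⟨X' l i, hX' l i⟩ (w i)
  have hτ : ∀ g : Fin s → SL n, tensorCoeff σ η τ g = rowDet fi d e (fun i => (g i).val) u := by
    intro g
    rw [hrow _ fun i => (g i).2]
    refine (tensorCoeff_sum hη c' _ g).trans (Finset.sum_congr rfl fun l _ => ?_)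
    rw [Fintype.prod_sigma]
    simp only [← prod_lead_eq_leadWeight]
    rfl
  have hη0 : ∀ i, η i ≠ 0 := fun i => ne_zero_of_matrixCoeff (hη i)
  refine ⟨τ, fun h => ?_, fun h => ?_⟩
  · let G : Fin s → SL n := fun i => ⟨g i, hg i⟩
    have h1 := hτ G
    rw [h, tensorCoeff_zero] at h1
    exact hgu h1.symm
  · refine sub_eq_zero.1 (eq_zero_of_tensorCoeff hirr' hη0 fun g' => ?_)
    have h1 := rowDet_mul_right fi d e (fun i => (g' i).val) u h.val
    rw [h.2, one_pow, mul_one] at h1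
    have h2 : tensorCoeff σ η (piTensorRep σ h τ) g' = tensorCoeff σ η τ g' := by
      rw [tensorCoeff_map, hτ, hτ, ← h1]
      rfl
    rw [tensorCoeff_sub, h2, sub_self]

end Assembly

end Saturation

theorem saturation_invariant_form (n s m : ℕ) (hm : 0 < m)
    (lam : Fin s → Fin n → ℤ) (hdom : ∀ i, SLDominant (lam i))
    (hQ : (n : ℤ) ∣ ∑ i, ∑ j, lam i j)
    -- `ρ i` is the irreducible representation `V(m • λᵢ)`
    (V : Fin s → Type*) [∀ i, AddCommGroup (V i)] [∀ i, Module ℂ (V i)]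
    [∀ i, FiniteDimensional ℂ (V i)]
    (ρ : ∀ i, Representation ℂ (SL n) (V i))
    (hirr : ∀ i, RepIsIrreducible (ρ i)) (hhw : ∀ i, Occurs (ρ i) (m • lam i))
    -- the space of `SL(n)`-invariants of `V(mλ₁) ⊗ ⋯ ⊗ V(mλ_s)` is nonzero
    (hinv : HasInvariant (piTensorRep ρ)) :
    -- then for (any model of) the representations `V(λ₁), …, V(λ_s)`, the space of
    -- `SL(n)`-invariants of `V(λ₁) ⊗ ⋯ ⊗ V(λ_s)` is nonzero
    ∀ (W : Fin s → Type*) [∀ i, AddCommGroup (W i)] [∀ i, Module ℂ (W i)]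
      [∀ i, FiniteDimensional ℂ (W i)] (σ : ∀ i, Representation ℂ (SL n) (W i)),
      (∀ i, RepIsIrreducible (σ i)) → (∀ i, Occurs (σ i) (lam i)) →
      HasInvariant (piTensorRep σ) := by
  intro W _ _ _ σ hirr' hhw'
  rcases Nat.eq_zero_or_pos n with rfl | hn
  · choose w hw using hhw'
    refine ⟨PiTensorProduct.tprod ℂ w, Saturation.tprod_ne_zero fun i => (hw i).1, fun g => ?_⟩
    rw [Subsingleton.elim g 1, map_one, Module.End.one_apply]
  · have : NeZero n := ⟨hn.ne'⟩
    exact Saturation.hasInvariant_of_smul hm hdom hQ hirr hhw hinv hirr' hhw'
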